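/- Let d be a positive integer with d mod 16 ∉ {0,7,12,15}, and write d = d₀·4ᵉ·f² with d₀ squarefree, f odd and e ∈ {0,1}. Then, as an identity of rational numbers, r₂₄(d) = c_d · r₃(d₀)² · f² · Σ_{c ∣ f} (2^{ω(c)}/c) · ∏_{p prime, p ∣ f} (1 − p⁻¹·(−d₀/p))^{e_p(f/c)}, where c_d = 1/2 if d ≡ 3 (mod 4), c_d = 1/6 if d ≡ 1 or 2 (mod 4), c_d = 1/3 if d ≡ 0 (mod 4); (−d₀/p) is the Legendre symbol; ω(c) is the number of distinct prime divisors of c; and e_p(n) = 2 if p ∣ n and e_p(n) = 1 otherwise. -/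

import Mathlib

/-- `r₂₄(n)`: half the number of vectors `(a,b,c,d,e,f) ∈ ℤ⁶` with
`gcd(a,b,c,d,e,f) = 1`, `af − be + cd = 0` and `a²+b²+c²+d²+e²+f² = n`. -/
noncomputable def r24 (n : ℕ) : ℚ :=
  (Nat.card {w : Fin 6 → ℤ //
    Finset.univ.gcd w = 1 ∧
    w 0 * w 5 - w 1 * w 4 + w 2 * w 3 = 0 ∧
    (w 0) ^ 2 + (w 1) ^ 2 + (w 2) ^ 2 + (w 3) ^ 2 + (w 4) ^ 2 + (w 5) ^ 2 = (n : ℤ)} : ℚ) / 2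

/-- `r₃(n)`: the number of triples `(x,y,z) ∈ ℤ³` with `x²+y²+z² = n`. -/
noncomputable def r3 (n : ℕ) : ℕ :=
  Nat.card {v : Fin 3 → ℤ // (v 0) ^ 2 + (v 1) ^ 2 + (v 2) ^ 2 = (n : ℤ)}

/-!
Regrouping the coordinates of a point of the Klein quadric as a pair `(u, v)` of vectors of `ℤ³`
turns the quadric into `u ⬝ᵥ v = 0`, and `(u, v) ↦ (u + v, u - v)` turns orthogonal pairs of total
squared norm `n` into pairs `(x, y)` with `|x|² = |y|² = n` and `x ≡ y (mod 2)`. Modulo 2 a vector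
of squared norm `n` has exactly `n % 4` odd coordinates, so all pairs are congruent if
`n ≡ 3 (mod 4)`, while for `n ≡ 1, 2 (mod 4)` exactly one of the three cyclic rotations of `y` is
congruent to `x`. This gives the constants `1/2`, `1/6` and, from the incongruent pairs of squared
norm `n / 4`, `1/3`, and it remains to count the jointly primitive pairs on the sphere of squared
norm `d₀ f²`. Sorting all pairs by the gcd of their coordinates expresses `r₃(d₀ f²)²` as a divisor
sum of these counts, which Möbius inversion and Hurwitz's formula for `r₃(d₀ f²)` then determine.

Hurwitz's formula follows from a recursion between the spheres of squared norm `n` and `p² n`, for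
`p` an odd prime. By Lagrange's descent every isotropic line `l` of `𝔽ₚ³` comes from an integral
quaternion `α` of norm `p` with `l α ≡ 0 (mod p)`, and `y ↦ α y ᾱ` maps the sphere of squared norm
`n` bijectively onto the `x` of squared norm `p² n` with `p² ∣ ᾱ x α`. If `p ∤ x` this divisibility
holds only for the line of `x`, and if `x = p x'` it holds for the isotropic lines orthogonal to
`x'`, of which there are `1 + (-n / p)`, or `p + 1` when `p ∣ x'`.
-/

open Finset Quaternion
open scoped Matrix

section Quaternion

variable {R S : Type*} [CommRing R] [CommRing S]

/-- The quaternion `a + bi + cj + dk`, given the type `ℍ[R]` for which the simp lemmas about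
coordinates are stated. -/
@[simps]
def mkQuaternion (a b c d : R) : ℍ[R] := ⟨a, b, c, d⟩

/-- The embedding of `R³` into the quaternions as the purely imaginary ones. -/
def pureQuaternion : (Fin 3 → R) →ₗ[R] ℍ[R] where
  toFun v := mkQuaternion 0 (v 0) (v 1) (v 2)
  map_add' v w := by ext <;> simp
  map_smul' c v := by ext <;> simp

theorem pureQuaternion_apply (v : Fin 3 → R) :
    pureQuaternion v = mkQuaternion 0 (v 0) (v 1) (v 2) := rfl

theorem pureQuaternion_injective : Function.Injective (pureQuaternion (R := R)) := by
  intro v w h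
  have hI := congrArg QuaternionAlgebra.imI h
  have hJ := congrArg QuaternionAlgebra.imJ h
  have hK := congrArg QuaternionAlgebra.imK h
  funext i
  fin_cases i
  exacts [hI, hJ, hK]

theorem exists_pureQuaternion_eq {q : ℍ[R]} (hq : q.re = 0) : ∃ v, pureQuaternion v = q :=
  ⟨![q.imI, q.imJ, q.imK], Quaternion.ext _ _ hq.symm rfl rfl rfl⟩

theorem normSq_pureQuaternion (v : Fin 3 → R) : normSq (pureQuaternion v) = v ⬝ᵥ v := by
  simp [pureQuaternion_apply, normSq_def', dotProduct, Fin.sum_univ_three, sq]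

theorem star_pureQuaternion (v : Fin 3 → R) : star (pureQuaternion v) = -pureQuaternion v := by
  ext <;> simp [pureQuaternion_apply]

theorem star_pureQuaternion_mul_eq_zero_iff {v : Fin 3 → R} {q : ℍ[R]} :
    star (pureQuaternion v) * q = 0 ↔ pureQuaternion v * q = 0 := by
  rw [star_pureQuaternion, neg_mul, neg_eq_zero]

theorem pureQuaternion_mul (v w : Fin 3 → R) :
    pureQuaternion v * pureQuaternion w = pureQuaternion (v ⨯₃ w) - ((v ⬝ᵥ w : R) : ℍ[R]) := by
  ext <;> simp only [pureQuaternion_apply, cross_apply, dotProduct, Fin.sum_univ_three, re_mul,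
    imI_mul, imJ_mul, imK_mul, re_sub, imI_sub, imJ_sub, imK_sub, re_coe, imI_coe, imJ_coe, imK_coe,
    re_mkQuaternion, imI_mkQuaternion, imJ_mkQuaternion, imK_mkQuaternion, Matrix.cons_val] <;>
    ring

theorem pureQuaternion_mul_self (v : Fin 3 → R) :
    pureQuaternion v * pureQuaternion v = -((v ⬝ᵥ v : R) : ℍ[R]) := by
  simp [pureQuaternion_mul]

theorem pureQuaternion_mul_add_mul (v w : Fin 3 → R) :
    pureQuaternion v * pureQuaternion w + pureQuaternion w * pureQuaternion v =
      -((2 * (v ⬝ᵥ w) : R) : ℍ[R]) := by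
  rw [pureQuaternion_mul, pureQuaternion_mul, ← cross_anticomm, dotProduct_comm w, two_mul,
    Quaternion.coe_add, map_neg]
  abel

theorem pureQuaternion_mul_eq_zero_iff {v w : Fin 3 → R} :
    pureQuaternion v * pureQuaternion w = 0 ↔ v ⨯₃ w = 0 ∧ v ⬝ᵥ w = 0 := by
  constructor
  · intro h
    have hdot : v ⬝ᵥ w = 0 := by
      have hre := congrArg QuaternionAlgebra.re (h.symm.trans (pureQuaternion_mul v w))
      simpa [pureQuaternion_apply] using hre
    refine ⟨pureQuaternion_injective ?_, hdot⟩
    simpa only [hdot, h, Quaternion.coe_zero, sub_zero, map_zero] using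
      (pureQuaternion_mul v w).symm
  · rintro ⟨hcross, hdot⟩
    simp [pureQuaternion_mul, hcross, hdot]

/-- The ring homomorphism `ℍ[R] →+* ℍ[S]` induced by `f : R →+* S`, coordinate by coordinate. -/
@[simps]
def quaternionMap (f : R →+* S) : ℍ[R] →+* ℍ[S] where
  toFun q := mkQuaternion (f q.re) (f q.imI) (f q.imJ) (f q.imK)
  map_one' := by ext <;> simp
  map_mul' a b := by ext <;> simp
  map_zero' := by ext <;> simp
  map_add' a b := by ext <;> simp

theorem quaternionMap_star (f : R →+* S) (q : ℍ[R]) :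
    quaternionMap f (star q) = star (quaternionMap f q) := by
  ext <;> simp

theorem quaternionMap_pureQuaternion (f : R →+* S) (v : Fin 3 → R) :
    quaternionMap f (pureQuaternion v) = pureQuaternion (f ∘ v) := by
  ext <;> simp [pureQuaternion_apply]

theorem normSq_quaternionMap (f : R →+* S) (q : ℍ[R]) :
    normSq (quaternionMap f q) = f (normSq q) := by
  simp [normSq_def']

/-- Reduction of integral quaternions modulo `n`. -/
abbrev quaternionMod (n : ℕ) : ℍ[ℤ] →+* ℍ[ZMod n] := quaternionMap (Int.castRingHom (ZMod n))

theorem quaternionMod_eq_zero_iff (n : ℕ) (q : ℍ[ℤ]) :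
    quaternionMod n q = 0 ↔ (n : ℍ[ℤ]) ∣ q := by
  constructor
  · intro h
    have hdvd {z : ℤ} (hz : (z : ZMod n) = 0) : n * (z / n) = z :=
      Int.mul_ediv_cancel' ((ZMod.intCast_zmod_eq_zero_iff_dvd z n).mp hz)
    refine ⟨mkQuaternion (q.re / n) (q.imI / n) (q.imJ / n) (q.imK / n), ?_⟩
    ext
    · simpa using (hdvd (congrArg QuaternionAlgebra.re h)).symm
    · simpa using (hdvd (congrArg QuaternionAlgebra.imI h)).symm
    · simpa using (hdvd (congrArg QuaternionAlgebra.imJ h)).symm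
    · simpa using (hdvd (congrArg QuaternionAlgebra.imK h)).symm
  · rintro ⟨r, rfl⟩
    have hn : (n : ℍ[ZMod n]) = 0 := by ext <;> simp
    rw [map_mul, map_natCast, hn, zero_mul]

end Quaternion

section QuaternionField

variable {K : Type*} [Field K]

theorem exists_mul_add_star_mul_star_eq_one (h2 : (2 : K) ≠ 0) {q : ℍ[K]} (hq : q ≠ 0) :
    ∃ s, q * s + star s * star q = 1 := by
  suffices h : ∃ s : ℍ[K], (q * s).re ≠ 0 by
    obtain ⟨s, hs⟩ := h
    refine ⟨(2 * (q * s).re)⁻¹ • s, ?_⟩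
    rw [← star_mul, mul_smul_comm, self_add_star', re_smul, smul_eq_mul, mul_left_comm,
      inv_mul_cancel₀ (mul_ne_zero h2 hs), Quaternion.coe_one]
  by_contra! h
  refine hq (Quaternion.ext _ _ ?_ ?_ ?_ ?_)
  · simpa using h (mkQuaternion 1 0 0 0)
  · simpa using h (mkQuaternion 0 1 0 0)
  · simpa using h (mkQuaternion 0 0 1 0)
  · simpa using h (mkQuaternion 0 0 0 1)

theorem exists_eq_mul_of_star_mul_eq_zero (h2 : (2 : K) ≠ 0) {a g : ℍ[K]} (ha : a ≠ 0)
    (hg : star a * g = 0) : ∃ b, g = a * b := by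
  obtain ⟨s, hs⟩ := exists_mul_add_star_mul_star_eq_one h2 ha
  refine ⟨s * g, ?_⟩
  calc g = (a * s + star s * star a) * g := by rw [hs, one_mul]
    _ = a * (s * g) + star s * (star a * g) := by noncomm_ring
    _ = a * (s * g) := by rw [hg, mul_zero, add_zero]

theorem star_mul_eq_zero_comm {a b : ℍ[K]} : star a * b = 0 ↔ star b * a = 0 := by
  rw [← star_eq_zero, star_mul, star_star]

theorem star_mul_eq_zero_trans (h2 : (2 : K) ≠ 0) {a b c : ℍ[K]} (hb : b ≠ 0)
    (hab : star a * b = 0) (hbc : star b * c = 0) : star a * c = 0 := by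
  obtain ⟨d, rfl⟩ := exists_eq_mul_of_star_mul_eq_zero h2 hb hbc
  rw [← mul_assoc, hab, zero_mul]

theorem star_mul_pureQuaternion_mul_eq_zero_iff (h2 : (2 : K) ≠ 0) {l x : Fin 3 → K} (hl : l ≠ 0)
    {a : ℍ[K]} (ha : a ≠ 0) (hla : pureQuaternion l * a = 0) :
    star a * pureQuaternion x * a = 0 ↔ l ⬝ᵥ x = 0 := by
  set L := pureQuaternion l
  set X := pureQuaternion x
  have hL : L ≠ 0 := (map_ne_zero_iff _ pureQuaternion_injective).mpr hl
  have hLa : star L * a = 0 := star_pureQuaternion_mul_eq_zero_iff.mpr hla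
  have hswitch : star a * (X * a) = 0 ↔ star L * (X * a) = 0 :=
    ⟨star_mul_eq_zero_trans h2 ha hLa,
      star_mul_eq_zero_trans h2 hL (star_mul_eq_zero_comm.mp hLa)⟩
  have hanticomm : L * (X * a) = -((2 * (l ⬝ᵥ x) : K) : ℍ[K]) * a := by
    rw [← pureQuaternion_mul_add_mul, add_mul, mul_assoc X, hla, mul_zero, add_zero, mul_assoc]
  rw [mul_assoc, hswitch, star_pureQuaternion_mul_eq_zero_iff, hanticomm, neg_mul, neg_eq_zero,
    coe_mul_eq_smul, smul_eq_zero_iff_left ha, mul_eq_zero_iff_left h2]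

end QuaternionField

section Descent

theorem dvd_normSq_iff {n : ℕ} {q : ℍ[ℤ]} :
    (n : ℤ) ∣ normSq q ↔ normSq (quaternionMod n q) = 0 := by
  rw [normSq_quaternionMap, Int.coe_castRingHom, ZMod.intCast_zmod_eq_zero_iff_dvd]

theorem four_mul_valMinAbs_sq_le {n : ℕ} [NeZero n] (x : ZMod n) :
    4 * x.valMinAbs ^ 2 ≤ (n : ℤ) ^ 2 := by
  obtain ⟨hlo, hhi⟩ := ZMod.valMinAbs_mem_Ioc x
  nlinarith

theorem exists_eq_mul_add_balanced (n : ℕ) [NeZero n] (q : ℍ[ℤ]) :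
    ∃ k r : ℍ[ℤ], q = n * k + r ∧ 4 * r.re ^ 2 ≤ (n : ℤ) ^ 2 ∧ 4 * r.imI ^ 2 ≤ (n : ℤ) ^ 2 ∧
      4 * r.imJ ^ 2 ≤ (n : ℤ) ^ 2 ∧ 4 * r.imK ^ 2 ≤ (n : ℤ) ^ 2 := by
  set r := mkQuaternion (q.re : ZMod n).valMinAbs (q.imI : ZMod n).valMinAbs
    (q.imJ : ZMod n).valMinAbs (q.imK : ZMod n).valMinAbs with hr
  obtain ⟨k, hk⟩ : (n : ℍ[ℤ]) ∣ q - r := by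
    rw [← quaternionMod_eq_zero_iff]
    ext <;> simp [hr]
  refine ⟨k, r, (sub_eq_iff_eq_add.mp hk), ?_⟩
  simp only [hr, re_mkQuaternion, imI_mkQuaternion, imJ_mkQuaternion, imK_mkQuaternion,
    four_mul_valMinAbs_sq_le, and_self]

theorem four_dvd_normSq_two_smul_add {k u : ℍ[ℤ]} (hre : u.re ^ 2 = 1) (hI : u.imI ^ 2 = 1)
    (hJ : u.imJ ^ 2 = 1) (hK : u.imK ^ 2 = 1) : (4 : ℤ) ∣ normSq ((2 : ℤ) • k + u) := by
  refine ⟨normSq k + (k.re * u.re + k.imI * u.imI + k.imJ * u.imJ + k.imK * u.imK) + 1, ?_⟩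
  simp only [normSq_def', re_add, imI_add, imJ_add, imK_add, re_smul, imI_smul, imJ_smul,
    imK_smul, smul_eq_mul]
  linear_combination hre + hI + hJ + hK

theorem sq_dvd_normSq_of_extremal {n : ℕ} {k r : ℍ[ℤ]}
    (hre : 4 * r.re ^ 2 = (n : ℤ) ^ 2) (hI : 4 * r.imI ^ 2 = (n : ℤ) ^ 2)
    (hJ : 4 * r.imJ ^ 2 = (n : ℤ) ^ 2) (hK : 4 * r.imK ^ 2 = (n : ℤ) ^ 2) :
    (n : ℤ) ^ 2 ∣ normSq (n * k + r) := by
  obtain ⟨s, hs⟩ : (2 : ℤ) ∣ n := by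
    have hsq : (2 : ℤ) ∣ (n : ℤ) ^ 2 := ⟨2 * r.re ^ 2, by linarith⟩
    exact Int.prime_two.dvd_of_dvd_pow hsq
  have eq_half_mul {x : ℤ} (hx : 4 * x ^ 2 = (n : ℤ) ^ 2) : ∃ t : ℤ, x = s * t ∧ t ^ 2 = 1 := by
    rcases sq_eq_sq_iff_eq_or_eq_neg.mp (show x ^ 2 = s ^ 2 by rw [hs] at hx; linarith) with h | h
    · exact ⟨1, by simpa using h, by norm_num⟩
    · exact ⟨-1, by simpa using h, by norm_num⟩
  obtain ⟨t₀, hr₀, ht₀⟩ := eq_half_mul hre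
  obtain ⟨t₁, hr₁, ht₁⟩ := eq_half_mul hI
  obtain ⟨t₂, hr₂, ht₂⟩ := eq_half_mul hJ
  obtain ⟨t₃, hr₃, ht₃⟩ := eq_half_mul hK
  have hfactor : n * k + r = s • ((2 : ℤ) • k + mkQuaternion t₀ t₁ t₂ t₃) := by
    ext <;> simp only [re_add, imI_add, imJ_add, imK_add, re_smul, imI_smul, imJ_smul, imK_smul,
      smul_eq_mul, re_mkQuaternion, imI_mkQuaternion, imJ_mkQuaternion, imK_mkQuaternion,
      ← Int.cast_natCast (R := ℍ[ℤ]), ← zsmul_eq_mul, hs, hr₀, hr₁, hr₂, hr₃] <;> ring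
  rw [hfactor, normSq_smul, hs, mul_pow, mul_comm (2 ^ 2 : ℤ)]
  exact mul_dvd_mul_left _ (four_dvd_normSq_two_smul_add ht₀ ht₁ ht₂ ht₃)

theorem exists_eq_mul_add_normSq_lt {n : ℕ} [NeZero n] {q : ℍ[ℤ]}
    (hq : ¬ (n : ℤ) ^ 2 ∣ normSq q) :
    ∃ k r : ℍ[ℤ], q = n * k + r ∧ 0 < normSq r ∧ normSq r < (n : ℤ) ^ 2 := by
  obtain ⟨k, r, rfl, hre, hI, hJ, hK⟩ := exists_eq_mul_add_balanced n q
  refine ⟨k, r, rfl, normSq_nonneg.lt_of_ne fun hr => hq ?_, ?_⟩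
  · rw [normSq_eq_zero.mp hr.symm, add_zero, map_mul, normSq_natCast]
    exact Dvd.intro _ rfl
  · have hnorm := normSq_def' r
    by_contra! hge
    exact hq (sq_dvd_normSq_of_extremal (by linarith) (by linarith) (by linarith) (by linarith))

variable {p : ℕ} [Fact p.Prime]

theorem exists_normSq_eq_mul_lt {l : ℍ[ZMod p]} {α : ℍ[ℤ]} {m : ℕ}
    (hl : l * quaternionMod p α = 0) (hα : normSq α = p * m) (hm : 1 < m) (hmp : m < p) :
    ∃ (β : ℍ[ℤ]) (t : ℕ), l * quaternionMod p β = 0 ∧ normSq β = p * t ∧ 0 < t ∧ t < m := by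
  have : NeZero m := ⟨by lia⟩
  have hm0 : (0 : ℤ) < m := by lia
  have hsq : ¬ (m : ℤ) ^ 2 ∣ normSq α := by
    rw [hα, sq, Int.mul_dvd_mul_iff_right hm0.ne', Int.natCast_dvd_natCast,
      Nat.dvd_prime Fact.out]
    lia
  obtain ⟨k, r, rfl, hpos, hlt⟩ := exists_eq_mul_add_normSq_lt hsq
  obtain ⟨t, ht⟩ : (m : ℤ) ∣ normSq r := by
    have hmod : quaternionMod m (m * k + r) = quaternionMod m r := by
      rw [map_add, (quaternionMod_eq_zero_iff m _).mpr (dvd_mul_right _ _), zero_add]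
    rw [dvd_normSq_iff, ← hmod, ← dvd_normSq_iff, hα]
    exact dvd_mul_left _ _
  rw [ht] at hpos hlt
  lift t to ℕ using (pos_of_mul_pos_right hpos hm0.le).le
  have hfactor : (m * k + r) * star r = m * (k * star r + t) := by
    rw [add_mul, self_mul_star, ht]
    push_cast
    noncomm_ring
  refine ⟨k * star r + t, t, ?_, ?_, ?_, ?_⟩
  · have hmul : (m : ZMod p) • (l * quaternionMod p (k * star r + t)) = 0 := by
      rw [← mul_smul_comm, Nat.cast_smul_eq_nsmul, nsmul_eq_mul, ← map_natCast (quaternionMod p),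
        ← map_mul, ← hfactor, map_mul, ← mul_assoc, hl, zero_mul]
    refine (smul_eq_zero_iff_right ?_).mp hmul
    rw [Ne, ZMod.natCast_eq_zero_iff]
    exact Nat.not_dvd_of_pos_of_lt (by lia) hmp
  · have hnorm := congrArg normSq hfactor
    rw [map_mul, map_mul, normSq_star, normSq_natCast, hα, ht] at hnorm
    exact mul_left_cancel₀ (pow_ne_zero 2 hm0.ne') (by linarith)
  · exact_mod_cast pos_of_mul_pos_right hpos hm0.le
  · rw [sq] at hlt
    exact_mod_cast lt_of_mul_lt_mul_left hlt hm0.le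

theorem exists_normSq_eq_prime_of_normSq_eq_mul {l : ℍ[ZMod p]} {α : ℍ[ℤ]} {m : ℕ}
    (hl : l * quaternionMod p α = 0) (hα : normSq α = p * m) (hm : 0 < m) (hmp : m < p) :
    ∃ β : ℍ[ℤ], normSq β = p ∧ l * quaternionMod p β = 0 := by
  induction m using Nat.strong_induction_on generalizing α with
  | _ m ih =>
    rcases Nat.eq_or_lt_of_le hm with rfl | hm1
    · exact ⟨α, by simpa using hα, hl⟩
    · obtain ⟨β, t, hβ, hnorm, ht, htm⟩ := exists_normSq_eq_mul_lt hl hα hm1 hmp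
      exact ih t htm hβ hnorm ht (htm.trans hmp)

theorem exists_normSq_eq_prime {l : Fin 3 → ZMod p} (hl : l ≠ 0) (hll : l ⬝ᵥ l = 0) :
    ∃ β : ℍ[ℤ], normSq β = p ∧ pureQuaternion l * quaternionMod p β = 0 := by
  set v : Fin 3 → ℤ := fun i => (l i).valMinAbs with hv
  have hmod : quaternionMod p (pureQuaternion v) = pureQuaternion l := by
    rw [quaternionMap_pureQuaternion]
    congr 1
    ext i
    simp [hv]
  have hp : (0 : ℤ) < p := mod_cast (Fact.out : p.Prime).pos
  obtain ⟨m, hm⟩ : (p : ℤ) ∣ normSq (pureQuaternion v) := by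
    rw [dvd_normSq_iff, hmod, normSq_pureQuaternion, hll]
  have hpos : 0 < normSq (pureQuaternion v) := by
    refine normSq_nonneg.lt_of_ne fun h => hl ?_
    rw [← pureQuaternion_injective.eq_iff, ← hmod, normSq_eq_zero.mp h.symm, map_zero, map_zero]
  have hlt : normSq (pureQuaternion v) < (p : ℤ) ^ 2 := by
    rw [normSq_pureQuaternion, dotProduct, Fin.sum_univ_three]
    nlinarith [four_mul_valMinAbs_sq_le (l 0), four_mul_valMinAbs_sq_le (l 1),
      four_mul_valMinAbs_sq_le (l 2)]
  rw [hm] at hpos hlt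
  have hm0 : 0 < m := pos_of_mul_pos_right hpos hp.le
  lift m to ℕ using hm0.le
  refine exists_normSq_eq_prime_of_normSq_eq_mul ?_ hm (mod_cast hm0) ?_
  · rw [hmod, pureQuaternion_mul_self, hll, Quaternion.coe_zero, neg_zero]
  · rw [sq] at hlt
    exact_mod_cast lt_of_mul_lt_mul_left hlt hp.le

end Descent

section IntegralSphere

theorem forall_dvd_iff_exists_smul {ι : Type*} {k : ℤ} {v : ι → ℤ} :
    (∀ i, k ∣ v i) ↔ ∃ w, k • w = v := by
  constructor
  · intro h
    choose w hw using h
    exact ⟨w, funext fun i => (hw i).symm⟩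
  · rintro ⟨w, rfl⟩ i
    exact dvd_mul_right _ _

variable {ι : Type*} [Fintype ι] [DecidableEq ι]

/-- The integral vectors of squared norm `n`, cut out of the box `[-n, n]^ι` that contains them. -/
noncomputable def integralSphere (ι : Type*) [Fintype ι] [DecidableEq ι] (n : ℕ) :
    Finset (ι → ℤ) :=
  {v ∈ Fintype.piFinset fun _ => Icc (-n : ℤ) n | v ⬝ᵥ v = n}

@[simp]
theorem mem_integralSphere {n : ℕ} {v : ι → ℤ} : v ∈ integralSphere ι n ↔ v ⬝ᵥ v = n := by
  simp only [integralSphere, mem_filter, Fintype.mem_piFinset, mem_Icc, and_iff_right_iff_imp]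
  intro hv i
  have hi : v i * v i ≤ n := by
    rw [← hv]
    exact single_le_sum (f := fun j => v j * v j) (fun j _ => mul_self_nonneg (v j)) (mem_univ i)
  exact abs_le.mp ((Int.le_self_sq _).trans (by rwa [sq_abs, sq]))

theorem smul_mem_integralSphere_iff {k n : ℕ} (hk : k ≠ 0) {v : ι → ℤ} :
    (k : ℤ) • v ∈ integralSphere ι (k ^ 2 * n) ↔ v ∈ integralSphere ι n := by
  have hk2 : (k : ℤ) ^ 2 ≠ 0 := pow_ne_zero 2 (mod_cast hk)
  simp only [mem_integralSphere, smul_dotProduct, dotProduct_smul, smul_eq_mul, Nat.cast_mul,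
    Nat.cast_pow]
  rw [← mul_assoc, ← sq, mul_right_inj' hk2]

theorem filter_dvd_integralSphere {k : ℕ} [DecidablePred fun x : ι → ℤ => ∀ i, (k : ℤ) ∣ x i]
    (hk : k ≠ 0) (n : ℕ) :
    {x ∈ integralSphere ι (k ^ 2 * n) | ∀ i, (k : ℤ) ∣ x i} =
      (integralSphere ι n).image ((k : ℤ) • ·) := by
  ext x
  rw [mem_filter, mem_image, forall_dvd_iff_exists_smul]
  constructor
  · rintro ⟨hx, w, rfl⟩
    exact ⟨w, (smul_mem_integralSphere_iff hk).mp hx, rfl⟩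
  · rintro ⟨w, hw, rfl⟩
    exact ⟨(smul_mem_integralSphere_iff hk).mpr hw, w, rfl⟩

theorem sum_filter_dvd_integralSphere {M : Type*} [AddCommMonoid M] {k : ℕ}
    [DecidablePred fun x : ι → ℤ => ∀ i, (k : ℤ) ∣ x i] (hk : k ≠ 0) (n : ℕ) (g : (ι → ℤ) → M) :
    ∑ x ∈ integralSphere ι (k ^ 2 * n) with ∀ i, (k : ℤ) ∣ x i, g x =
      ∑ x ∈ integralSphere ι n, g ((k : ℤ) • x) := by
  rw [filter_dvd_integralSphere hk,
    sum_image (smul_right_injective _ (Nat.cast_ne_zero.mpr hk)).injOn]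

theorem sq_dvd_of_dvd_of_mem_integralSphere {k n : ℕ} {v : ι → ℤ} (hv : v ∈ integralSphere ι n)
    (hk : ∀ i, (k : ℤ) ∣ v i) : k ^ 2 ∣ n := by
  rw [mem_integralSphere] at hv
  zify
  rw [← hv, sq]
  exact dvd_sum fun i _ => mul_dvd_mul (hk i) (hk i)

end IntegralSphere

section Conjugation

theorem natCast_quaternion_ne_zero {m : ℕ} (hm : m ≠ 0) : (m : ℍ[ℤ]) ≠ 0 := by
  rw [← normSq_ne_zero, normSq_natCast]
  exact pow_ne_zero 2 (mod_cast hm)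

theorem re_mul_mul_star (α q : ℍ[ℤ]) : (α * q * star α).re = normSq α * q.re := by
  simp only [re_mul, imI_mul, imJ_mul, imK_mul, re_star, imI_star, imJ_star, imK_star, normSq_def']
  ring

theorem star_mul_mul_mul_eq {α : ℍ[ℤ]} {m : ℕ} (hα : normSq α = m) (q : ℍ[ℤ]) :
    star α * (α * q * star α) * α = m ^ 2 * q := by
  have hself : star α * α = m := by rw [star_mul_self, hα]; norm_cast
  calc star α * (α * q * star α) * α = star α * α * q * (star α * α) := by noncomm_ring
    _ = m ^ 2 * q := by rw [hself, mul_assoc, ← (Nat.cast_commute m q).eq, ← mul_assoc, ← sq]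

theorem sq_dvd_star_mul_mul_iff {α x : ℍ[ℤ]} {m : ℕ} (hα : normSq α = m) (hm : m ≠ 0) :
    (m : ℍ[ℤ]) ^ 2 ∣ star α * x * α ↔ ∃ q, α * q * star α = x := by
  constructor
  · rintro ⟨q, hq⟩
    have hm' : (m : ℍ[ℤ]) ^ 2 ≠ 0 := pow_ne_zero 2 (natCast_quaternion_ne_zero hm)
    have hα' : normSq (star α) = m := by rwa [normSq_star]
    have hx := star_mul_mul_mul_eq hα' x
    rw [star_star, hq] at hx
    refine ⟨q, mul_left_cancel₀ hm' (hx ▸ ?_)⟩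
    rw [← mul_assoc, ← mul_assoc, ((Nat.cast_commute m α).pow_left 2).eq, mul_assoc α]
  · rintro ⟨q, rfl⟩
    exact ⟨q, star_mul_mul_mul_eq hα q⟩

open Classical in
theorem card_filter_sq_dvd_star_mul_mul {α : ℍ[ℤ]} {m : ℕ} (hα : normSq α = m) (hm : m ≠ 0)
    (n : ℕ) :
    #{x ∈ integralSphere (Fin 3) (m ^ 2 * n) |
        (m : ℍ[ℤ]) ^ 2 ∣ star α * pureQuaternion x * α} = #(integralSphere (Fin 3) n) := by
  have hα0 : α ≠ 0 := by
    rintro rfl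
    simp [eq_comm, hm] at hα
  have hmem {x y : Fin 3 → ℤ} (h : α * pureQuaternion y * star α = pureQuaternion x) :
      x ∈ integralSphere (Fin 3) (m ^ 2 * n) ↔ y ∈ integralSphere (Fin 3) n := by
    have hnorm := congrArg normSq h
    rw [map_mul, map_mul, normSq_star, hα, normSq_pureQuaternion, normSq_pureQuaternion] at hnorm
    rw [mem_integralSphere, mem_integralSphere, ← hnorm, mul_right_comm, ← sq]
    push_cast
    exact mul_right_inj' (pow_ne_zero 2 (mod_cast hm))
  have hconj : Function.Injective fun y => α * pureQuaternion y * star α :=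
    (mul_left_injective₀ (star_ne_zero.mpr hα0)).comp
      ((mul_right_injective₀ hα0).comp pureQuaternion_injective)
  rw [← card_image_of_injective _ pureQuaternion_injective, ← card_image_of_injective _ hconj]
  congr 1
  ext q
  simp only [mem_image, mem_filter, sq_dvd_star_mul_mul_iff hα hm]
  constructor
  · rintro ⟨x, ⟨hx, q, hq⟩, rfl⟩
    have hre := re_mul_mul_star α q
    rw [hq, hα, pureQuaternion_apply, re_mkQuaternion, eq_comm, mul_eq_zero_iff_left (mod_cast hm)]
      at hre
    obtain ⟨y, rfl⟩ := exists_pureQuaternion_eq hre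
    exact ⟨y, (hmem hq).mp hx, hq⟩
  · rintro ⟨y, hy, rfl⟩
    have hre : (α * pureQuaternion y * star α).re = 0 := by
      rw [re_mul_mul_star, pureQuaternion_apply, re_mkQuaternion, mul_zero]
    obtain ⟨x, hx⟩ := exists_pureQuaternion_eq hre
    exact ⟨x, ⟨(hmem hx.symm).mpr hy, _, hx.symm⟩, hx⟩

variable {p : ℕ} [Fact p.Prime] {l : Fin 3 → ZMod p} {α : ℍ[ℤ]}

theorem sq_dvd_star_mul_smul_mul_iff (h2 : (2 : ZMod p) ≠ 0) (hl : l ≠ 0)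
    (hα : quaternionMod p α ≠ 0) (hlα : pureQuaternion l * quaternionMod p α = 0) (x : Fin 3 → ℤ) :
    (p : ℍ[ℤ]) ^ 2 ∣ star α * pureQuaternion ((p : ℤ) • x) * α ↔ l ⬝ᵥ (Int.cast ∘ x) = 0 := by
  have hp : (p : ℍ[ℤ]) ≠ 0 := natCast_quaternion_ne_zero (NeZero.ne p)
  have hfactor : star α * pureQuaternion ((p : ℤ) • x) * α =
      p * (star α * pureQuaternion x * α) := by
    rw [map_smul, mul_smul_comm, smul_mul_assoc, zsmul_eq_mul, Int.cast_natCast]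
  rw [hfactor, sq, mul_dvd_mul_iff_left hp, ← quaternionMod_eq_zero_iff, map_mul, map_mul,
    quaternionMap_star, quaternionMap_pureQuaternion]
  exact star_mul_pureQuaternion_mul_eq_zero_iff h2 hl hα hlα

theorem quaternionMod_ne_zero_of_normSq_eq (hα : normSq α = p) : quaternionMod p α ≠ 0 := by
  rw [Ne, quaternionMod_eq_zero_iff]
  rintro ⟨q, rfl⟩
  rw [map_mul, normSq_natCast] at hα
  have hdvd : (p : ℤ) * p ∣ p * 1 := ⟨normSq q, by rw [mul_one, ← sq, hα]⟩
  have hp : Prime (p : ℤ) := Nat.prime_iff_prime_int.mp Fact.out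
  exact hp.not_dvd_one ((mul_dvd_mul_iff_left hp.ne_zero).mp hdvd)

theorem sq_dvd_star_mul_mul_of_mod_eq_zero (h2 : (2 : ZMod p) ≠ 0) {x : Fin 3 → ℤ}
    (hx : (Int.cast ∘ x : Fin 3 → ZMod p) ≠ 0) (hpx : (p : ℤ) ^ 2 ∣ x ⬝ᵥ x)
    (hxα : pureQuaternion (Int.cast ∘ x) * quaternionMod p α = 0) :
    (p : ℍ[ℤ]) ^ 2 ∣ star α * pureQuaternion x * α := by
  have hp : (p : ℍ[ℤ]) ≠ 0 := natCast_quaternion_ne_zero (NeZero.ne p)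
  have hX : pureQuaternion (Int.cast ∘ x : Fin 3 → ZMod p) ≠ 0 :=
    (map_ne_zero_iff _ pureQuaternion_injective).mpr hx
  have hmod : quaternionMod p (pureQuaternion x) = pureQuaternion (Int.cast ∘ x) :=
    quaternionMap_pureQuaternion _ x
  rw [← hmod, ← map_mul, quaternionMod_eq_zero_iff] at hxα
  -- Writing `x α = p γ`, both `α` and `γ` are annihilated by `x` modulo `p`, whence `ᾱ γ ≡ 0`.
  obtain ⟨γ, hγ⟩ := hxα
  have star_mul_eq_zero {b : ℍ[ℤ]} (hb : (p : ℍ[ℤ]) ∣ pureQuaternion x * b) :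
      star (pureQuaternion (Int.cast ∘ x)) * quaternionMod p b = 0 := by
    rw [star_pureQuaternion_mul_eq_zero_iff, ← hmod, ← map_mul]
    exact (quaternionMod_eq_zero_iff p _).mpr hb
  have hxγ : (p : ℍ[ℤ]) ∣ pureQuaternion x * γ := by
    obtain ⟨c, hc⟩ := hpx
    rw [← mul_dvd_mul_iff_left hp]
    refine ⟨-c * α, ?_⟩
    calc (p : ℍ[ℤ]) * (pureQuaternion x * γ) = pureQuaternion x * (p * γ) := by
          rw [← mul_assoc, Nat.cast_commute p, mul_assoc]
      _ = pureQuaternion x * pureQuaternion x * α := by rw [← hγ, mul_assoc]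
      _ = p * p * (-c * α) := by
          rw [pureQuaternion_mul_self, hc]
          push_cast
          noncomm_ring
  have hαγ : (p : ℍ[ℤ]) ∣ star α * γ := by
    rw [← quaternionMod_eq_zero_iff, map_mul, quaternionMap_star]
    exact star_mul_eq_zero_trans h2 hX
      (star_mul_eq_zero_comm.mp (star_mul_eq_zero ⟨γ, hγ⟩)) (star_mul_eq_zero hxγ)
  rw [mul_assoc, hγ, ← mul_assoc, ← Nat.cast_commute p, mul_assoc, sq]
  exact mul_dvd_mul_left _ hαγ

theorem sq_dvd_star_mul_mul_iff_of_ne_zero (h2 : (2 : ZMod p) ≠ 0) (hα : normSq α = p)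
    (hl : l ≠ 0) (hlα : pureQuaternion l * quaternionMod p α = 0) {x : Fin 3 → ℤ}
    (hx : (Int.cast ∘ x : Fin 3 → ZMod p) ≠ 0) (hpx : (p : ℤ) ^ 2 ∣ x ⬝ᵥ x) :
    (p : ℍ[ℤ]) ^ 2 ∣ star α * pureQuaternion x * α ↔
      pureQuaternion l * pureQuaternion (Int.cast ∘ x) = 0 := by
  constructor
  · intro h
    obtain ⟨q, hq⟩ := (sq_dvd_star_mul_mul_iff hα (NeZero.ne p)).mp h
    have hmod : quaternionMod p (pureQuaternion x) = pureQuaternion (Int.cast ∘ x) :=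
      quaternionMap_pureQuaternion _ x
    rw [← hmod, ← hq, map_mul, map_mul, ← mul_assoc, ← mul_assoc, hlα, zero_mul, zero_mul]
  · intro hlx
    refine sq_dvd_star_mul_mul_of_mod_eq_zero h2 hx hpx ?_
    have hL : pureQuaternion l ≠ 0 := (map_ne_zero_iff _ pureQuaternion_injective).mpr hl
    exact star_pureQuaternion_mul_eq_zero_iff.mp <| star_mul_eq_zero_trans h2 hL
      (star_mul_eq_zero_comm.mp (star_pureQuaternion_mul_eq_zero_iff.mpr hlx))
      (star_pureQuaternion_mul_eq_zero_iff.mpr hlα)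

end Conjugation

section FiniteField

variable {K : Type*} [Field K]

theorem exists_sq_add_sq_ne_zero (h2 : (2 : K) ≠ 0) {w : Fin 3 → K} (hw : w ≠ 0) :
    ∃ σ : Equiv.Perm (Fin 3), w (σ 0) ^ 2 + w (σ 1) ^ 2 ≠ 0 := by
  by_contra! h
  have h01 : w 0 ^ 2 + w 1 ^ 2 = 0 := h 1
  have h12 : w 1 ^ 2 + w 2 ^ 2 = 0 := h (Equiv.addRight 1)
  have h20 : w 2 ^ 2 + w 0 ^ 2 = 0 := h (Equiv.addRight 2)
  have hsq (i : Fin 3) : 2 * w i ^ 2 = 0 := by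
    match i with
    | 0 => linear_combination h01 - h12 + h20
    | 1 => linear_combination h01 + h12 - h20
    | 2 => linear_combination h12 - h01 + h20
  exact hw (funext fun i => by simpa [h2] using hsq i)

theorem crossProduct_eq_zero_iff_exists_smul {v w : Fin 3 → K} (hw : w ≠ 0) :
    v ⨯₃ w = 0 ↔ ∃ c : K, c • w = v := by
  rw [← cross_anticomm, neg_eq_zero, ← not_iff_not, ← ne_eq,
    crossProduct_ne_zero_iff_linearIndependent, LinearIndependent.pair_iff' hw, not_exists]

theorem pureQuaternion_mul_eq_zero_iff_crossProduct {v w : Fin 3 → K} (hw : w ≠ 0)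
    (hww : w ⬝ᵥ w = 0) : pureQuaternion v * pureQuaternion w = 0 ↔ v ⨯₃ w = 0 := by
  rw [pureQuaternion_mul_eq_zero_iff, and_iff_left_iff_imp,
    crossProduct_eq_zero_iff_exists_smul hw]
  rintro ⟨c, rfl⟩
  rw [smul_dotProduct, hww, smul_zero]

variable [Fintype K] [DecidableEq K]

theorem card_sq_eq (hK : ringChar K ≠ 2) {β : Type*} [Fintype β] (g : β → K) :
    (#{v : K × β | v.1 ^ 2 = g v.2} : ℤ) = ∑ b, (1 + quadraticChar K (g b)) := by
  rw [← univ_product_univ, card_filter, sum_product_right]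
  push_cast
  refine sum_congr rfl fun b _ => ?_
  rw [add_comm, ← quadraticChar_card_sqrts hK, Set.toFinset_ofPred, card_filter]
  push_cast
  rfl

open Polynomial in
theorem sum_quadraticChar_neg_sq_add_sq (hK : ringChar K ≠ 2) :
    ∑ v : K × K, quadraticChar K (-(v.1 ^ 2 + v.2 ^ 2)) = 0 := by
  obtain ⟨t, ht⟩ := quadraticChar_exists_neg_one hK
  obtain ⟨a, b, hab⟩ : ∃ a b : K, a ^ 2 + b ^ 2 = t := by
    obtain ⟨a, b, hab⟩ := FiniteField.exists_root_sum_quadratic (degree_X_pow 2)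
      (degree_X_pow_sub_C two_pos t) (FiniteField.odd_card_of_char_ne_two hK)
    refine ⟨a, b, sub_eq_zero.mp ?_⟩
    simpa only [eval_sub, eval_pow, eval_X, eval_C, ← add_sub_assoc] using hab
  have ht0 : a ^ 2 + b ^ 2 ≠ 0 := by
    intro h
    simp [← hab, h] at ht
  have hbij : Function.Bijective fun v : K × K => (a * v.1 - b * v.2, b * v.1 + a * v.2) := by
    rw [← Finite.injective_iff_bijective]
    rintro ⟨x, y⟩ ⟨x', y'⟩ h
    simp only [Prod.mk.injEq] at h ⊢
    constructor <;> refine mul_left_cancel₀ ht0 ?_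
    · linear_combination a * h.1 + b * h.2
    · linear_combination a * h.2 - b * h.1
  -- `(x, y) ↦ (a x - b y, b x + a y)` multiplies norms by the non-square `t`, negating the sum.
  have hneg (v : K × K) :
      quadraticChar K (-((a * v.1 - b * v.2) ^ 2 + (b * v.1 + a * v.2) ^ 2)) =
        -quadraticChar K (-(v.1 ^ 2 + v.2 ^ 2)) := by
    rw [← neg_one_mul (quadraticChar K _), ← ht, ← map_mul, ← hab]
    congr 1
    ring
  have hsum := hbij.sum_comp fun v : K × K => quadraticChar K (-(v.1 ^ 2 + v.2 ^ 2))
  simp only [hneg, sum_neg_distrib] at hsum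
  linarith

theorem card_isotropic (hK : ringChar K ≠ 2) :
    #{v : Fin 3 → K | v ⬝ᵥ v = 0} = Fintype.card K ^ 2 := by
  have hcard : #{v : Fin 3 → K | v ⬝ᵥ v = 0} =
      #{v : K × K × K | v.1 ^ 2 = -(v.2.1 ^ 2 + v.2.2 ^ 2)} := by
    refine card_bij' (fun v _ => (v 0, v 1, v 2)) (fun v _ => ![v.1, v.2.1, v.2.2])
      (fun v hv => ?_) (fun v hv => ?_) (fun v _ => ?_) fun v _ => rfl
    · simp only [mem_filter_univ, dotProduct, Fin.sum_univ_three] at hv ⊢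
      linear_combination hv
    · simp only [mem_filter_univ, dotProduct, Fin.sum_univ_three, Matrix.cons_val] at hv ⊢
      linear_combination hv
    · ext i
      fin_cases i <;> rfl
  have hsum := card_sq_eq hK fun v : K × K => -(v.1 ^ 2 + v.2 ^ 2)
  rw [sum_add_distrib, sum_quadraticChar_neg_sq_add_sq hK, add_zero, sum_const, card_univ,
    Fintype.card_prod, nsmul_one] at hsum
  rw [hcard, sq]
  exact_mod_cast hsum

theorem card_isotropic_orthogonal_of_ne (hK : ringChar K ≠ 2) {w : Fin 3 → K}
    (hw : w 0 ^ 2 + w 1 ^ 2 ≠ 0) :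
    (#{v : Fin 3 → K | v ⬝ᵥ v = 0 ∧ w ⬝ᵥ v = 0} : ℤ) =
      1 + (Fintype.card K - 1) * (1 + quadraticChar K (-(w ⬝ᵥ w))) := by
  have hcard : #{v : Fin 3 → K | v ⬝ᵥ v = 0 ∧ w ⬝ᵥ v = 0} =
      #{v : K × K | v.1 ^ 2 = -(w ⬝ᵥ w) * v.2 ^ 2} := by
    -- `(w₀² + w₁²)(v₀² + v₁²) = (w₀ v₀ + w₁ v₁)² + (w₁ v₀ - w₀ v₁)²`, and `w ⬝ᵥ v = 0` turns the
    -- first square into `(w₂ v₂)²`.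
    refine card_bij' (fun v _ => (w 1 * v 0 - w 0 * v 1, v 2)) (fun v _ =>
      ![(w 1 * v.1 - w 0 * w 2 * v.2) / (w 0 ^ 2 + w 1 ^ 2),
        -(w 0 * v.1 + w 1 * w 2 * v.2) / (w 0 ^ 2 + w 1 ^ 2), v.2])
      (fun v hv => ?_) (fun v hv => ?_) (fun v hv => ?_) fun v hv => ?_
    · simp only [mem_filter_univ, dotProduct, Fin.sum_univ_three] at hv ⊢
      linear_combination (w 0 ^ 2 + w 1 ^ 2) * hv.1 -
        (w 0 * v 0 + w 1 * v 1 - w 2 * v 2) * hv.2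
    · simp only [mem_filter_univ, dotProduct, Fin.sum_univ_three, Matrix.cons_val] at hv ⊢
      constructor
      · field_simp
        linear_combination (w 0 ^ 2 + w 1 ^ 2) * hv
      · field_simp
        ring
    · simp only [mem_filter_univ, dotProduct, Fin.sum_univ_three] at hv
      ext i
      fin_cases i <;> simp only [Matrix.cons_val, Fin.zero_eta, Fin.mk_one, Fin.reduceFinMk]
      · field_simp
        linear_combination -w 0 * hv.2
      · field_simp
        linear_combination -w 1 * hv.2
    · simp only [Matrix.cons_val, Prod.ext_iff, and_true]
      field_simp
      ring
  have hchar {x : K} (hx : x ∈ univ.erase 0) :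
      1 + quadraticChar K (-(w ⬝ᵥ w) * x ^ 2) = 1 + quadraticChar K (-(w ⬝ᵥ w)) := by
    rw [map_mul, quadraticChar_sq_one' (ne_of_mem_erase hx), mul_one]
  rw [hcard, card_sq_eq hK fun x => -(w ⬝ᵥ w) * x ^ 2, ← add_sum_erase _ _ (mem_univ (0 : K)),
    sum_congr rfl fun x hx => hchar hx, sum_const, card_erase_of_mem (mem_univ _), card_univ,
    nsmul_eq_mul, Nat.cast_pred Fintype.card_pos]
  simp

theorem card_isotropic_orthogonal (hK : ringChar K ≠ 2) {w : Fin 3 → K} (hw : w ≠ 0) :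
    (#{v : Fin 3 → K | v ⬝ᵥ v = 0 ∧ w ⬝ᵥ v = 0} : ℤ) =
      1 + (Fintype.card K - 1) * (1 + quadraticChar K (-(w ⬝ᵥ w))) := by
  obtain ⟨σ, hσ⟩ := exists_sq_add_sq_ne_zero (Ring.two_ne_zero hK) hw
  have hcard : #{v : Fin 3 → K | v ⬝ᵥ v = 0 ∧ w ⬝ᵥ v = 0} =
      #{v : Fin 3 → K | v ⬝ᵥ v = 0 ∧ (w ∘ σ) ⬝ᵥ v = 0} := by
    refine card_equiv (σ.symm.arrowCongr (Equiv.refl K)) fun v => ?_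
    have hv : σ.symm.arrowCongr (Equiv.refl K) v = v ∘ σ := rfl
    rw [mem_filter_univ, mem_filter_univ, hv, comp_equiv_dotProduct_comp_equiv,
      comp_equiv_dotProduct_comp_equiv]
  rw [hcard, card_isotropic_orthogonal_of_ne (w := w ∘ σ) hK hσ, comp_equiv_dotProduct_comp_equiv]

theorem card_isotropic_ne_zero (hK : ringChar K ≠ 2) :
    #{v : Fin 3 → K | v ⬝ᵥ v = 0 ∧ v ≠ 0} = Fintype.card K ^ 2 - 1 := by
  rw [← card_isotropic hK, ← filter_filter, filter_ne', card_erase_of_mem (by simp)]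

theorem card_isotropic_ne_zero_orthogonal (hK : ringChar K ≠ 2) {w : Fin 3 → K} (hw : w ≠ 0) :
    (#{v : Fin 3 → K | (v ⬝ᵥ v = 0 ∧ v ≠ 0) ∧ v ⬝ᵥ w = 0} : ℤ) =
      (Fintype.card K - 1) * (1 + quadraticChar K (-(w ⬝ᵥ w))) := by
  have herase : ({v : Fin 3 → K | (v ⬝ᵥ v = 0 ∧ v ≠ 0) ∧ v ⬝ᵥ w = 0} : Finset _) =
      ({v | v ⬝ᵥ v = 0 ∧ w ⬝ᵥ v = 0} : Finset _).erase 0 := by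
    ext v
    simp only [mem_filter_univ, mem_erase, dotProduct_comm w]
    tauto
  rw [herase, card_erase_of_mem (by simp), Nat.cast_pred (card_pos.mpr ⟨0, by simp⟩),
    card_isotropic_orthogonal hK hw, add_sub_cancel_left]

theorem card_isotropic_ne_zero_parallel {w : Fin 3 → K} (hw : w ≠ 0) (hww : w ⬝ᵥ w = 0) :
    #{v : Fin 3 → K | (v ⬝ᵥ v = 0 ∧ v ≠ 0) ∧ v ⨯₃ w = 0} = Fintype.card K - 1 := by
  have himage : ({v : Fin 3 → K | (v ⬝ᵥ v = 0 ∧ v ≠ 0) ∧ v ⨯₃ w = 0} : Finset _) =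
      (univ.erase (0 : K)).image (· • w) := by
    ext v
    simp only [mem_filter_univ, crossProduct_eq_zero_iff_exists_smul hw, mem_image, mem_erase,
      mem_univ, and_true]
    constructor
    · rintro ⟨⟨-, hv⟩, c, rfl⟩
      exact ⟨c, left_ne_zero_of_smul hv, rfl⟩
    · rintro ⟨c, hc, rfl⟩
      exact ⟨⟨by simp [hww], smul_ne_zero hc hw⟩, c, rfl⟩
  rw [himage, card_image_of_injective _ (smul_left_injective K hw),
    card_erase_of_mem (mem_univ _), card_univ]

end FiniteField

section HurwitzRecursion

variable {p : ℕ} [Fact p.Prime]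

theorem intCast_comp_eq_zero_iff {ι : Type*} {x : ι → ℤ} :
    (Int.cast ∘ x : ι → ZMod p) = 0 ↔ ∀ i, (p : ℤ) ∣ x i := by
  simp [funext_iff, ZMod.intCast_zmod_eq_zero_iff_dvd]

theorem intCast_comp_dotProduct_self {ι : Type*} [Fintype ι] [DecidableEq ι] {n : ℕ} {x : ι → ℤ}
    (hx : x ∈ integralSphere ι n) :
    (Int.cast ∘ x : ι → ZMod p) ⬝ᵥ (Int.cast ∘ x) = n := by
  have hcast := congrArg (Int.castRingHom (ZMod p)) (mem_integralSphere.mp hx)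
  rw [RingHom.map_dotProduct] at hcast
  simpa using hcast

theorem exists_normSq_eq_prime_forall (p : ℕ) [Fact p.Prime] :
    ∃ α : (Fin 3 → ZMod p) → ℍ[ℤ], ∀ l, l ⬝ᵥ l = 0 ∧ l ≠ 0 →
      normSq (α l) = p ∧ pureQuaternion l * quaternionMod p (α l) = 0 := by
  have hex (l : Fin 3 → ZMod p) : ∃ β : ℍ[ℤ], l ⬝ᵥ l = 0 ∧ l ≠ 0 →
      normSq β = p ∧ pureQuaternion l * quaternionMod p β = 0 := by
    by_cases hl : l ⬝ᵥ l = 0 ∧ l ≠ 0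
    · obtain ⟨β, hβ⟩ := exists_normSq_eq_prime hl.2 hl.1
      exact ⟨β, fun _ => hβ⟩
    · exact ⟨0, fun h => absurd h hl⟩
  choose α hα using hex
  exact ⟨α, hα⟩

open Classical in
theorem card_filter_sq_dvd_of_ne_zero (hp : p ≠ 2) {α : (Fin 3 → ZMod p) → ℍ[ℤ]}
    (hα : ∀ l, l ⬝ᵥ l = 0 ∧ l ≠ 0 →
      normSq (α l) = p ∧ pureQuaternion l * quaternionMod p (α l) = 0)
    {n : ℕ} {x : Fin 3 → ℤ} (hx : x ∈ integralSphere (Fin 3) (p ^ 2 * n))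
    (hpx : ¬ ∀ i, (p : ℤ) ∣ x i) :
    #{l | (l ⬝ᵥ l = 0 ∧ l ≠ 0) ∧
      (p : ℍ[ℤ]) ^ 2 ∣ star (α l) * pureQuaternion x * α l} = p - 1 := by
  have h2 : (2 : ZMod p) ≠ 0 := Ring.two_ne_zero (by rwa [ZMod.ringChar_zmod_n])
  rw [← intCast_comp_eq_zero_iff (p := p)] at hpx
  have hiso := intCast_comp_dotProduct_self (p := p) hx
  rw [Nat.cast_mul, Nat.cast_pow, CharP.cast_eq_zero, zero_pow two_ne_zero, zero_mul] at hiso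
  have hdvd : (p : ℤ) ^ 2 ∣ x ⬝ᵥ x := by simp [mem_integralSphere.mp hx]
  have hparallel := card_isotropic_ne_zero_parallel hpx hiso
  rw [ZMod.card] at hparallel
  rw [← hparallel]
  congr 1
  refine filter_congr fun l _ => and_congr_right fun hl => ?_
  rw [sq_dvd_star_mul_mul_iff_of_ne_zero h2 (hα l hl).1 hl.2 (hα l hl).2 hpx hdvd,
    pureQuaternion_mul_eq_zero_iff_crossProduct hpx hiso]

open Classical in
theorem card_filter_sq_dvd_smul (hp : p ≠ 2) {α : (Fin 3 → ZMod p) → ℍ[ℤ]}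
    (hα : ∀ l, l ⬝ᵥ l = 0 ∧ l ≠ 0 →
      normSq (α l) = p ∧ pureQuaternion l * quaternionMod p (α l) = 0)
    {n : ℕ} {x : Fin 3 → ℤ} (hx : x ∈ integralSphere (Fin 3) n) :
    (#{l | (l ⬝ᵥ l = 0 ∧ l ≠ 0) ∧
      (p : ℍ[ℤ]) ^ 2 ∣ star (α l) * pureQuaternion ((p : ℤ) • x) * α l} : ℤ) =
      (p - 1) * (1 + legendreSym p (-n) + if ∀ i, (p : ℤ) ∣ x i then (p : ℤ) else 0) := by
  have hK : ringChar (ZMod p) ≠ 2 := by rwa [ZMod.ringChar_zmod_n]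
  have horth : ({l | (l ⬝ᵥ l = 0 ∧ l ≠ 0) ∧
        (p : ℍ[ℤ]) ^ 2 ∣ star (α l) * pureQuaternion ((p : ℤ) • x) * α l} : Finset _) =
      ({l | (l ⬝ᵥ l = 0 ∧ l ≠ 0) ∧ l ⬝ᵥ (Int.cast ∘ x) = 0} : Finset (Fin 3 → ZMod p)) := by
    refine filter_congr fun l _ => and_congr_right fun hl => ?_
    exact sq_dvd_star_mul_smul_mul_iff (Ring.two_ne_zero hK) hl.2
      (quaternionMod_ne_zero_of_normSq_eq (hα l hl).1) (hα l hl).2 x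
  rw [horth]
  have hnorm := intCast_comp_dotProduct_self (p := p) hx
  split_ifs with hpx
  · have hχ : legendreSym p (-n) = 0 := by
      have hpn : p ∣ n := (dvd_pow_self p two_ne_zero).trans
        (sq_dvd_of_dvd_of_mem_integralSphere hx hpx)
      rw [legendreSym.eq_zero_iff, ZMod.intCast_zmod_eq_zero_iff_dvd]
      exact (Int.natCast_dvd_natCast.mpr hpn).neg_right
    simp only [intCast_comp_eq_zero_iff.mpr hpx, dotProduct_zero, and_true]
    rw [card_isotropic_ne_zero hK, ZMod.card, hχ,
      Nat.cast_pred (pow_pos (Fact.out : p.Prime).pos 2)]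
    push_cast
    ring
  · rw [← intCast_comp_eq_zero_iff (p := p)] at hpx
    rw [card_isotropic_ne_zero_orthogonal hK hpx, ZMod.card, hnorm, legendreSym, add_zero]
    push_cast
    rfl

open Classical in
theorem sum_card_filter_sq_dvd (hp : p ≠ 2) {α : (Fin 3 → ZMod p) → ℍ[ℤ]}
    (hα : ∀ l, l ⬝ᵥ l = 0 ∧ l ≠ 0 →
      normSq (α l) = p ∧ pureQuaternion l * quaternionMod p (α l) = 0) (n : ℕ) :
    (∑ x ∈ integralSphere (Fin 3) (p ^ 2 * n), #{l | (l ⬝ᵥ l = 0 ∧ l ≠ 0) ∧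
      (p : ℍ[ℤ]) ^ 2 ∣ star (α l) * pureQuaternion x * α l} : ℤ) =
      (p - 1) * (#(integralSphere (Fin 3) (p ^ 2 * n)) +
        legendreSym p (-n) * #(integralSphere (Fin 3) n) +
        p * #{x ∈ integralSphere (Fin 3) n | ∀ i, (p : ℤ) ∣ x i}) := by
  have hprime : p.Prime := Fact.out
  have hcard := card_filter_add_card_filter_not (s := integralSphere (Fin 3) (p ^ 2 * n))
    fun x => ∀ i, (p : ℤ) ∣ x i
  rw [card_eq_sum_ones, sum_filter_dvd_integralSphere hprime.ne_zero, ← card_eq_sum_ones] at hcard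
  have hindivisible {x : Fin 3 → ℤ}
      (hx : x ∈ (integralSphere (Fin 3) (p ^ 2 * n)).filter fun x => ¬ ∀ i, (p : ℤ) ∣ x i) :
      (#{l | (l ⬝ᵥ l = 0 ∧ l ≠ 0) ∧
        (p : ℍ[ℤ]) ^ 2 ∣ star (α l) * pureQuaternion x * α l} : ℤ) = p - 1 := by
    rw [mem_filter] at hx
    rw [card_filter_sq_dvd_of_ne_zero hp hα hx.1 hx.2, Nat.cast_pred hprime.pos]
  rw [← sum_filter_add_sum_filter_not _ fun x => ∀ i, (p : ℤ) ∣ x i,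
    sum_filter_dvd_integralSphere hprime.ne_zero,
    sum_congr rfl fun x hx => card_filter_sq_dvd_smul hp hα hx,
    sum_congr rfl fun x hx => hindivisible hx, ← mul_sum, sum_add_distrib, ← sum_filter, sum_const,
    sum_const, sum_const, ← hcard]
  push_cast
  ring

theorem card_integralSphere_sq_mul (hp : p ≠ 2) (n : ℕ) :
    (#(integralSphere (Fin 3) (p ^ 2 * n)) : ℤ) =
      (p + 1 - legendreSym p (-n)) * #(integralSphere (Fin 3) n) -
        p * #{x ∈ integralSphere (Fin 3) n | ∀ i, (p : ℤ) ∣ x i} := by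
  classical
  have hprime : p.Prime := Fact.out
  obtain ⟨α, hα⟩ := exists_normSq_eq_prime_forall p
  -- Count the pairs `(l, x)` with `p² ∣ ᾱₗ x αₗ` in two ways.
  have hcount := sum_card_bipartiteAbove_eq_sum_card_bipartiteBelow (s := {l | l ⬝ᵥ l = 0 ∧ l ≠ 0})
    (t := integralSphere (Fin 3) (p ^ 2 * n))
    fun l x => (p : ℍ[ℤ]) ^ 2 ∣ star (α l) * pureQuaternion x * α l
  simp only [bipartiteAbove, bipartiteBelow, filter_filter] at hcount
  have hfiber {l : Fin 3 → ZMod p} (hl : l ∈ univ.filter fun l => l ⬝ᵥ l = 0 ∧ l ≠ 0) :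
      #{x ∈ integralSphere (Fin 3) (p ^ 2 * n) |
        (p : ℍ[ℤ]) ^ 2 ∣ star (α l) * pureQuaternion x * α l} = #(integralSphere (Fin 3) n) :=
    card_filter_sq_dvd_star_mul_mul (hα l (mem_filter_univ l |>.mp hl)).1 hprime.ne_zero n
  rw [sum_congr rfl fun l hl => hfiber hl, sum_const,
    card_isotropic_ne_zero (by rwa [ZMod.ringChar_zmod_n]), ZMod.card, smul_eq_mul] at hcount
  zify at hcount
  rw [sum_card_filter_sq_dvd hp hα, Nat.cast_pred (pow_pos hprime.pos 2)] at hcount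
  have hp1 : (p : ℤ) - 1 ≠ 0 := sub_ne_zero.mpr (mod_cast hprime.one_lt.ne')
  refine mul_left_cancel₀ hp1 ?_
  push_cast at hcount
  linear_combination -hcount

end HurwitzRecursion

section EulerFactors

open ArithmeticFunction
open scoped ArithmeticFunction.zeta

variable {R : Type*} [Field R]

/-- The arithmetic function `n ↦ 2 ^ ω(n) / n`. -/
noncomputable def twoPowOmegaDiv (R : Type*) [Field R] : ArithmeticFunction R :=
  (prodPrimeFactors fun _ => (2 : R)).pdiv (ArithmeticFunction.id : ArithmeticFunction ℕ)

theorem twoPowOmegaDiv_apply {n : ℕ} (hn : n ≠ 0) :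
    twoPowOmegaDiv R n = 2 ^ n.primeFactors.card / n := by
  rw [twoPowOmegaDiv, pdiv_apply, natCoe_apply, id_apply, prodPrimeFactors_apply hn, prod_const]

theorem isMultiplicative_twoPowOmegaDiv : (twoPowOmegaDiv R).IsMultiplicative :=
  (IsMultiplicative.prodPrimeFactors _).pdiv isMultiplicative_id.natCast

variable (χ : ℕ → R)

/-- The product of the inverse Euler factors `1 - χ(p) / p` over the primes dividing `n`. -/
def eulerProd : ArithmeticFunction R := prodPrimeFactors fun p => 1 - (p : R)⁻¹ * χ p

theorem eulerProd_apply {n : ℕ} (hn : n ≠ 0) :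
    eulerProd χ n = ∏ p ∈ n.primeFactors, (1 - (p : R)⁻¹ * χ p) :=
  prodPrimeFactors_apply hn

theorem isMultiplicative_eulerProd : (eulerProd χ).IsMultiplicative :=
  IsMultiplicative.prodPrimeFactors _

theorem eulerProd_prime_pow_succ {p : ℕ} (hp : p.Prime) (k : ℕ) :
    eulerProd χ (p ^ (k + 1)) = 1 - (p : R)⁻¹ * χ p := by
  rw [eulerProd_apply χ (pow_ne_zero _ hp.ne_zero), Nat.primeFactors_prime_pow k.succ_ne_zero hp,
    prod_singleton]

theorem eulerProd_mul_eulerProd_of_dvd {m n : ℕ} (hn : n ≠ 0) (hmn : m ∣ n) :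
    eulerProd χ n * eulerProd χ m =
      ∏ p ∈ n.primeFactors, (1 - (p : R)⁻¹ * χ p) ^ (if p ∣ m then 2 else 1) := by
  have hm : m ≠ 0 := ne_zero_of_dvd_ne_zero hn hmn
  have hfilter : m.primeFactors = {p ∈ n.primeFactors | p ∣ m} := by
    ext p
    simp only [Nat.mem_primeFactors, mem_filter]
    exact ⟨fun h => ⟨⟨h.1, h.2.1.trans hmn, hn⟩, h.2.1⟩, fun h => ⟨h.1.1, h.2, hm⟩⟩
  rw [eulerProd_apply χ hn, eulerProd_apply χ hm, hfilter, prod_filter, ← prod_mul_distrib]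
  refine prod_congr rfl fun p _ => ?_
  split_ifs
  · rw [sq]
  · rw [mul_one, pow_one]

/-- The arithmetic function `n ↦ n ∏ (1 - χ(p) / p)`, which is Euler's totient for `χ = 1`. -/
def twistedTotient : ArithmeticFunction R :=
  ((ArithmeticFunction.id : ArithmeticFunction ℕ) : ArithmeticFunction R).pmul (eulerProd χ)

theorem isMultiplicative_twistedTotient : (twistedTotient χ).IsMultiplicative :=
  isMultiplicative_id.natCast.pmul (isMultiplicative_eulerProd χ)

theorem twistedTotient_apply (n : ℕ) : twistedTotient χ n = n * eulerProd χ n := by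
  rw [twistedTotient, pmul_apply, natCoe_apply, id_apply]

/-- The arithmetic function `n ↦ ∑ c ∣ n, c ∏ (1 - χ(p) / p)`. For `χ(p) = (-d / p)` this is
Hurwitz's ratio between the numbers of representations of `d n²` and of `d` as a sum of three
squares. -/
noncomputable def hurwitzFactor : ArithmeticFunction R :=
  twistedTotient χ * (ζ : ArithmeticFunction R)

theorem isMultiplicative_hurwitzFactor : (hurwitzFactor χ).IsMultiplicative :=
  (isMultiplicative_twistedTotient χ).mul isMultiplicative_zeta.natCast

theorem hurwitzFactor_prime_pow {p : ℕ} (hp : p.Prime) (k : ℕ) :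
    hurwitzFactor χ (p ^ k) = ∑ i ∈ range (k + 1), twistedTotient χ (p ^ i) := by
  rw [hurwitzFactor, coe_mul_zeta_apply, Nat.sum_divisors_prime_pow hp]

/-- The arithmetic function `n ↦ n² ∏ (1 - χ(p) / p) ∑ c ∣ n, 2 ^ ω(c) / c ∏ (1 - χ(p) / p)`, with
products over the primes dividing `n` and `n / c`. It is the Möbius inverse of the square of
`hurwitzFactor`. -/
noncomputable def primitiveFactor : ArithmeticFunction R :=
  (twistedTotient χ).pmul
    (((ArithmeticFunction.id : ArithmeticFunction ℕ) : ArithmeticFunction R).pmul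
      (twoPowOmegaDiv R * eulerProd χ))

theorem isMultiplicative_primitiveFactor : (primitiveFactor χ).IsMultiplicative :=
  (isMultiplicative_twistedTotient χ).pmul (isMultiplicative_id.natCast.pmul
    (isMultiplicative_twoPowOmegaDiv.mul (isMultiplicative_eulerProd χ)))

theorem primitiveFactor_eq {n : ℕ} (hn : n ≠ 0) :
    primitiveFactor χ n = (n : R) ^ 2 * ∑ c ∈ n.divisors,
      ((2 ^ c.primeFactors.card : R) / (c : R)) * ∏ p ∈ n.primeFactors,
        (1 - (p : R)⁻¹ * χ p) ^ (if p ∣ n / c then 2 else 1) := by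
  rw [primitiveFactor, pmul_apply, pmul_apply, natCoe_apply, id_apply, twistedTotient_apply,
    mul_apply, Nat.sum_divisorsAntidiagonal fun x y => twoPowOmegaDiv R x * eulerProd χ y, mul_sum,
    mul_sum, mul_sum]
  refine sum_congr rfl fun c hc => ?_
  rw [← eulerProd_mul_eulerProd_of_dvd χ hn (Nat.div_dvd_of_dvd (Nat.dvd_of_mem_divisors hc)),
    twoPowOmegaDiv_apply (Nat.pos_of_mem_divisors hc).ne']
  ring

variable [CharZero R]

theorem hurwitzFactor_prime_pow_succ {p : ℕ} (hp : p.Prime) (k : ℕ) :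
    hurwitzFactor χ (p ^ (k + 1)) = hurwitzFactor χ (p ^ k) + (p : R) ^ k * (p - χ p) := by
  have hp0 : (p : R) ≠ 0 := mod_cast hp.ne_zero
  rw [hurwitzFactor_prime_pow χ hp, sum_range_succ, ← hurwitzFactor_prime_pow χ hp,
    twistedTotient_apply, eulerProd_prime_pow_succ χ hp]
  push_cast
  field_simp
  ring

theorem prime_pow_mul_twoPowOmegaDiv_mul_eulerProd {p : ℕ} (hp : p.Prime) (k : ℕ) :
    (p : R) ^ (k + 1) * (twoPowOmegaDiv R * eulerProd χ) (p ^ (k + 1)) =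
      hurwitzFactor χ (p ^ (k + 1)) + hurwitzFactor χ (p ^ k) := by
  have hp0 : (p : R) ≠ 0 := mod_cast hp.ne_zero
  rw [mul_apply, Nat.sum_divisorsAntidiagonal' fun x y => twoPowOmegaDiv R x * eulerProd χ y,
    Nat.sum_divisors_prime_pow hp, sum_range_succ, Nat.div_self (pow_pos hp.pos _),
    isMultiplicative_twoPowOmegaDiv.map_one, hurwitzFactor_prime_pow χ hp,
    hurwitzFactor_prime_pow χ hp, sum_range_succ _ (k + 1), add_right_comm, ← two_mul,
    mul_add, mul_sum, mul_sum]
  congr 1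
  · refine sum_congr rfl fun i hi => ?_
    obtain ⟨j, rfl⟩ := Nat.exists_eq_add_of_le (mem_range_succ_iff.mp hi)
    rw [add_assoc i j 1, pow_add p, Nat.mul_div_cancel_left _ (pow_pos hp.pos _),
      twoPowOmegaDiv_apply (pow_ne_zero _ hp.ne_zero),
      Nat.primeFactors_prime_pow j.succ_ne_zero hp, card_singleton, twistedTotient_apply]
    push_cast
    field_simp
    ring
  · rw [twistedTotient_apply, one_mul, Nat.cast_pow]

theorem primitiveFactor_mul_zeta :
    primitiveFactor χ * (ζ : ArithmeticFunction R) =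
      (hurwitzFactor χ).pmul (hurwitzFactor χ) := by
  rw [IsMultiplicative.eq_iff_eq_on_prime_powers _
    ((isMultiplicative_primitiveFactor χ).mul isMultiplicative_zeta.natCast) _
    ((isMultiplicative_hurwitzFactor χ).pmul (isMultiplicative_hurwitzFactor χ))]
  intro p k hp
  rw [coe_mul_zeta_apply, Nat.sum_divisors_prime_pow hp, pmul_apply]
  induction k with
  | zero =>
    simp [(isMultiplicative_primitiveFactor χ).map_one,
      (isMultiplicative_hurwitzFactor χ).map_one]
  | succ k ih =>
    have hp0 : (p : R) ≠ 0 := mod_cast hp.ne_zero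
    have hterm : primitiveFactor χ (p ^ (k + 1)) = (p : R) ^ k * (p - χ p) *
        (hurwitzFactor χ (p ^ (k + 1)) + hurwitzFactor χ (p ^ k)) := by
      rw [primitiveFactor, pmul_apply, pmul_apply, natCoe_apply, id_apply, Nat.cast_pow,
        prime_pow_mul_twoPowOmegaDiv_mul_eulerProd χ hp, twistedTotient_apply,
        eulerProd_prime_pow_succ χ hp]
      push_cast
      field_simp
      ring
    rw [sum_range_succ, ih, hterm, hurwitzFactor_prime_pow_succ χ hp]
    ring

theorem sum_divisors_primitiveFactor (n : ℕ) :
    ∑ c ∈ n.divisors, primitiveFactor χ c = hurwitzFactor χ n ^ 2 := by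
  rw [← coe_mul_zeta_apply, primitiveFactor_mul_zeta, pmul_apply, sq]

end EulerFactors

section SphereCounts

theorem not_sq_dvd_mul_sq_of_squarefree {p a d : ℕ} (hp : p.Prime) (hd : Squarefree d)
    (ha : ¬ p ∣ a) : ¬ p ^ 2 ∣ a ^ 2 * d := by
  intro h
  have hcop : Nat.Coprime (p ^ 2) (a ^ 2) := (hp.coprime_iff_not_dvd.mpr ha).pow 2 2
  have hpd := hcop.dvd_of_dvd_mul_left h
  rw [sq] at hpd
  exact hp.one_lt.ne' (Nat.isUnit_iff.mp (hd p hpd))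

variable {p : ℕ} [Fact p.Prime]

theorem card_integralSphere_sq_mul_of_not_dvd (hp : p ≠ 2) {n : ℕ} (hn : ¬ p ^ 2 ∣ n) :
    (#(integralSphere (Fin 3) (p ^ 2 * n)) : ℤ) =
      (p + 1 - legendreSym p (-n)) * #(integralSphere (Fin 3) n) := by
  have hempty : {x ∈ integralSphere (Fin 3) n | ∀ i, (p : ℤ) ∣ x i} = ∅ :=
    filter_eq_empty_iff.mpr fun x hx h => hn (sq_dvd_of_dvd_of_mem_integralSphere hx h)
  rw [card_integralSphere_sq_mul hp, hempty, card_empty, Nat.cast_zero, mul_zero, sub_zero]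

theorem card_integralSphere_sq_mul_sq_mul (hp : p ≠ 2) (n : ℕ) :
    (#(integralSphere (Fin 3) (p ^ 2 * (p ^ 2 * n))) : ℤ) =
      (p + 1) * #(integralSphere (Fin 3) (p ^ 2 * n)) - p * #(integralSphere (Fin 3) n) := by
  have hχ : legendreSym p (-(p ^ 2 * n : ℕ)) = 0 := by
    rw [legendreSym.eq_zero_iff]
    simp
  rw [card_integralSphere_sq_mul hp, hχ, sub_zero, card_eq_sum_ones (filter _ _),
    sum_filter_dvd_integralSphere (NeZero.ne p), ← card_eq_sum_ones]

theorem card_integralSphere_pow_sq_mul (hp : p ≠ 2) {n : ℕ} (hn : ¬ p ^ 2 ∣ n) {χ : ℕ → ℚ}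
    (hχ : χ p = legendreSym p (-n)) (k : ℕ) :
    (#(integralSphere (Fin 3) ((p ^ k) ^ 2 * n)) : ℚ) =
      #(integralSphere (Fin 3) n) * hurwitzFactor χ (p ^ k) := by
  have hprime : p.Prime := Fact.out
  induction k using Nat.twoStepInduction with
  | zero => simp [(isMultiplicative_hurwitzFactor χ).map_one]
  | one =>
    have hrec := congrArg (Int.cast : ℤ → ℚ) (card_integralSphere_sq_mul_of_not_dvd hp hn)
    push_cast at hrec
    rw [pow_one, hrec, ← hχ]
    have hH := hurwitzFactor_prime_pow_succ χ hprime 0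
    rw [zero_add, pow_one, pow_zero, (isMultiplicative_hurwitzFactor χ).map_one] at hH
    rw [hH]
    ring
  | more k ih ih' =>
    have hrec := congrArg (Int.cast : ℤ → ℚ)
      (card_integralSphere_sq_mul_sq_mul hp ((p ^ k) ^ 2 * n))
    rw [← mul_assoc (p ^ 2) _ n, ← mul_pow, ← pow_succ', ← mul_assoc, ← mul_pow, ← pow_succ']
      at hrec
    push_cast at hrec
    rw [hrec, ih, ih', hurwitzFactor_prime_pow_succ χ hprime (k + 1),
      hurwitzFactor_prime_pow_succ χ hprime k]
    ring

theorem legendreSym_neg_sq_mul {a : ℕ} (ha : ¬ p ∣ a) (d : ℕ) :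
    legendreSym p (-(a ^ 2 * d : ℕ)) = legendreSym p (-d) := by
  have ha0 : ((a : ℤ) : ZMod p) ≠ 0 := by rwa [Int.cast_natCast, Ne, ZMod.natCast_eq_zero_iff]
  have hrw : -((a ^ 2 * d : ℕ) : ℤ) = (a : ℤ) ^ 2 * -d := by
    push_cast
    ring
  rw [hrw, legendreSym.mul, legendreSym.sq_one' p ha0, one_mul]

theorem card_integralSphere_sq_mul_of_squarefree {d : ℕ} (hd : Squarefree d) {f : ℕ}
    (hf : Odd f) :
    (#(integralSphere (Fin 3) (f ^ 2 * d)) : ℚ) =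
      #(integralSphere (Fin 3) d) * hurwitzFactor (fun p => (jacobiSym (-d) p : ℚ)) f := by
  set χ : ℕ → ℚ := fun p => (jacobiSym (-d) p : ℚ)
  have hmul := isMultiplicative_hurwitzFactor χ
  induction f using Nat.recOnPrimePow with
  | zero => simp at hf
  | one => simp [hmul.map_one]
  | prime_pow_mul a p k hp hpa hk ih =>
    obtain ⟨hpk, ha⟩ := Nat.odd_mul.mp hf
    have hp2 : p ≠ 2 := by
      rintro rfl
      exact Nat.not_odd_iff_even.mpr even_two ((Nat.odd_pow_iff hk.ne').mp hpk)
    have : Fact p.Prime := ⟨hp⟩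
    have hχp : χ p = legendreSym p (-(a ^ 2 * d : ℕ)) := by
      rw [legendreSym_neg_sq_mul hpa, jacobiSym.legendreSym.to_jacobiSym]
    rw [hmul.map_mul_of_coprime ((hp.coprime_iff_not_dvd.mpr hpa).pow_left k), mul_pow, mul_assoc,
      card_integralSphere_pow_sq_mul hp2 (not_sq_dvd_mul_sq_of_squarefree hp hd hpa) hχp k, ih ha]
    ring

end SphereCounts

section PrimitivePairs

theorem eq_of_sum_divisors_eq_on {R : Type*} [AddCommGroup R] {a b : ℕ → R} {s : Set ℕ}
    (hs : ∀ m n, m ∣ n → n ∈ s → m ∈ s) (hs₀ : 0 ∉ s)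
    (h : ∀ n ∈ s, ∑ c ∈ n.divisors, a c = ∑ c ∈ n.divisors, b c) {n : ℕ} (hn : n ∈ s) :
    a n = b n := by
  have inversion (a : ℕ → R) (h : ∀ n ∈ s, ∑ c ∈ n.divisors, a c = ∑ c ∈ n.divisors, b c) :=
    (ArithmeticFunction.sum_eq_iff_sum_smul_moebius_eq_on' s hs hs₀).mp h n hn
  exact (inversion a h).symm.trans (inversion b fun _ _ => rfl)

theorem dvd_of_sq_dvd_sq_mul_squarefree {d f g : ℕ} (hd : Squarefree d) (hf : f ≠ 0)
    (h : g ^ 2 ∣ f ^ 2 * d) : g ∣ f := by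
  obtain ⟨g', f', hcop, hg, hf'⟩ := Nat.exists_coprime g f
  have hgcd : 0 < g.gcd f ^ 2 := pow_pos (Nat.gcd_pos_of_pos_right _ hf.pos) 2
  have hmul : g' ^ 2 * g.gcd f ^ 2 ∣ f' ^ 2 * d * g.gcd f ^ 2 := by
    rwa [← mul_pow, mul_right_comm, ← mul_pow, ← hg, ← hf']
  have hdvd : g' ^ 2 ∣ d :=
    (hcop.pow 2 2).dvd_of_dvd_mul_left (Nat.dvd_of_mul_dvd_mul_right hgcd hmul)
  have hg' : g' = 1 := Nat.isUnit_iff.mp (hd g' (sq g' ▸ hdvd))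
  rw [hg, hg', one_mul]
  exact Nat.gcd_dvd_right g f

variable {ι : Type*} [Fintype ι]

/-- The greatest common divisor of all the coordinates of a pair of integral vectors. -/
def pairGcd (w : (ι → ℤ) × (ι → ℤ)) : ℕ :=
  Int.gcd (univ.gcd w.1) (univ.gcd w.2)

theorem dvd_pairGcd_iff {k : ℕ} {w : (ι → ℤ) × (ι → ℤ)} :
    k ∣ pairGcd w ↔ (∀ i, (k : ℤ) ∣ w.1 i) ∧ ∀ i, (k : ℤ) ∣ w.2 i := by
  simp [pairGcd, Int.dvd_gcd_iff, Finset.dvd_gcd_iff]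

theorem dvd_pairGcd_iff_exists_smul {k : ℕ} {w : (ι → ℤ) × (ι → ℤ)} :
    k ∣ pairGcd w ↔ ∃ y, (k : ℤ) • y = w := by
  rw [dvd_pairGcd_iff, forall_dvd_iff_exists_smul, forall_dvd_iff_exists_smul, Prod.exists]
  constructor
  · rintro ⟨⟨u, hu⟩, v, hv⟩
    exact ⟨u, v, Prod.ext hu hv⟩
  · rintro ⟨u, v, rfl⟩
    exact ⟨⟨u, rfl⟩, v, rfl⟩

theorem pairGcd_smul (k : ℕ) (w : (ι → ℤ) × (ι → ℤ)) :
    pairGcd ((k : ℤ) • w) = k * pairGcd w := by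
  have hgcd (v : ι → ℤ) : univ.gcd ((k : ℤ) • v) = k * univ.gcd v := by
    conv_rhs => rw [← Int.normalize_coe_nat k, ← Finset.gcd_mul_left]
    rfl
  rw [pairGcd, Prod.smul_fst, Prod.smul_snd, hgcd, hgcd, Int.gcd_mul_left, Int.natAbs_natCast,
    pairGcd]

variable [DecidableEq ι]

/-- The pairs of integral vectors of squared norm `n` whose coordinates are jointly coprime. -/
noncomputable def primitivePairs (ι : Type*) [Fintype ι] [DecidableEq ι] (n : ℕ) :
    Finset ((ι → ℤ) × (ι → ℤ)) :=
  {w ∈ integralSphere ι n ×ˢ integralSphere ι n | pairGcd w = 1}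

theorem mem_primitivePairs {n : ℕ} {w : (ι → ℤ) × (ι → ℤ)} :
    w ∈ primitivePairs ι n ↔
      (w.1 ∈ integralSphere ι n ∧ w.2 ∈ integralSphere ι n) ∧ pairGcd w = 1 := by
  rw [primitivePairs, mem_filter, mem_product]

theorem card_filter_pairGcd_eq {g : ℕ} (hg : g ≠ 0) (n : ℕ) :
    #{w ∈ integralSphere ι (g ^ 2 * n) ×ˢ integralSphere ι (g ^ 2 * n) | pairGcd w = g} =
      #(primitivePairs ι n) := by
  have hinj : Function.Injective fun w : (ι → ℤ) × (ι → ℤ) => (g : ℤ) • w :=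
    smul_right_injective _ (mod_cast hg)
  have hmem (w : (ι → ℤ) × (ι → ℤ)) : w ∈ primitivePairs ι n ↔
      ((g : ℤ) • w) ∈ ({w ∈ integralSphere ι (g ^ 2 * n) ×ˢ integralSphere ι (g ^ 2 * n) |
        pairGcd w = g} : Finset ((ι → ℤ) × (ι → ℤ))) := by
    rw [mem_primitivePairs, mem_filter, mem_product, Prod.smul_fst, Prod.smul_snd,
      smul_mem_integralSphere_iff hg, smul_mem_integralSphere_iff hg, pairGcd_smul,
      Nat.mul_eq_left hg]
  rw [← card_image_of_injective (primitivePairs ι n) hinj]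
  congr 1
  ext w
  rw [mem_image]
  constructor
  · intro hw
    have hgw : pairGcd w = g := (mem_filter.mp hw).2
    obtain ⟨y, rfl⟩ := dvd_pairGcd_iff_exists_smul.mp hgw.symm.dvd
    exact ⟨y, (hmem y).mpr hw, rfl⟩
  · rintro ⟨y, hy, rfl⟩
    exact (hmem y).mp hy

theorem sum_card_primitivePairs {d : ℕ} (hd : Squarefree d) {f : ℕ} (hf : f ≠ 0) :
    ∑ c ∈ f.divisors, #(primitivePairs ι (c ^ 2 * d)) = #(integralSphere ι (f ^ 2 * d)) ^ 2 := by
  have hmaps (w : (ι → ℤ) × (ι → ℤ))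
      (hw : w ∈ integralSphere ι (f ^ 2 * d) ×ˢ integralSphere ι (f ^ 2 * d)) :
      pairGcd w ∈ f.divisors :=
    Nat.mem_divisors.mpr ⟨dvd_of_sq_dvd_sq_mul_squarefree hd hf <|
      sq_dvd_of_dvd_of_mem_integralSphere (mem_product.mp hw).1 (dvd_pairGcd_iff.mp dvd_rfl).1, hf⟩
  rw [sq, ← card_product, card_eq_sum_card_fiberwise hmaps, ← Nat.sum_div_divisors]
  refine sum_congr rfl fun g hg => ?_
  obtain ⟨c, rfl⟩ := Nat.dvd_of_mem_divisors hg
  have hg0 : g ≠ 0 := left_ne_zero_of_mul hf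
  rw [Nat.mul_div_cancel_left _ hg0.pos, ← card_filter_pairGcd_eq hg0, mul_pow, mul_assoc]

theorem card_primitivePairs_of_squarefree {d : ℕ} (hd : Squarefree d) {f : ℕ} (hf : Odd f) :
    (#(primitivePairs (Fin 3) (f ^ 2 * d)) : ℚ) =
      #(integralSphere (Fin 3) d) ^ 2 * primitiveFactor (fun p => (jacobiSym (-d) p : ℚ)) f := by
  refine eq_of_sum_divisors_eq_on (s := {n | Odd n})
    (a := fun n => (#(primitivePairs (Fin 3) (n ^ 2 * d)) : ℚ))
    (b := fun n => #(integralSphere (Fin 3) d) ^ 2 * primitiveFactor _ n)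
    (fun m n hmn hn => hn.of_dvd_nat hmn) (by simp) (fun n hn => ?_) hf
  rw [← mul_sum, sum_divisors_primitiveFactor, ← mul_pow,
    ← card_integralSphere_sq_mul_of_squarefree hd hn]
  exact_mod_cast sum_card_primitivePairs hd hn.pos.ne'

end PrimitivePairs

section Parity

theorem dotProduct_self_modEq_card_odd {ι : Type*} [Fintype ι] (v : ι → ℤ) :
    v ⬝ᵥ v ≡ (#{i | Odd (v i)} : ℕ) [ZMOD 4] := by
  have hsq (a : ℤ) : a * a ≡ if Odd a then 1 else 0 [ZMOD 4] := by
    split_ifs with ha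
    · rw [← sq]
      exact Int.sq_mod_four_eq_one_of_odd ha
    · obtain ⟨b, rfl⟩ := Int.not_odd_iff_even.mp ha
      exact Int.modEq_zero_iff_dvd.mpr ⟨b * b, by ring⟩
  rw [card_filter, Nat.cast_sum]
  push_cast
  exact Int.ModEq.sum fun i _ => hsq (v i)

theorem card_odd_of_mem_integralSphere {n : ℕ} {v : Fin 3 → ℤ}
    (hv : v ∈ integralSphere (Fin 3) n) :
    #{i | Odd (v i)} = n % 4 := by
  have hmod := dotProduct_self_modEq_card_odd v
  have hle : #{i | Odd (v i)} ≤ 3 := card_le_univ _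
  rw [mem_integralSphere.mp hv, Int.ModEq] at hmod
  lia

theorem even_of_mem_integralSphere_four_mul {n : ℕ} {v : Fin 3 → ℤ}
    (hv : v ∈ integralSphere (Fin 3) (4 * n)) (i : Fin 3) : Even (v i) := by
  have hcard := card_odd_of_mem_integralSphere hv
  rw [Nat.mul_mod_right, card_eq_zero, filter_eq_empty_iff] at hcard
  exact Int.not_odd_iff_even.mp (hcard (mem_univ i))

theorem odd_of_mem_integralSphere {n : ℕ} (hn : n % 4 = 3) {v : Fin 3 → ℤ}
    (hv : v ∈ integralSphere (Fin 3) n) (i : Fin 3) : Odd (v i) := by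
  have hcard : #{i | Odd (v i)} = #(univ : Finset (Fin 3)) :=
    (card_odd_of_mem_integralSphere hv).trans hn
  exact card_filter_eq_iff.mp hcard i (mem_univ i)

theorem modEq_two_iff_odd_iff_odd {a b : ℤ} : a ≡ b [ZMOD 2] ↔ (Odd a ↔ Odd b) := by
  rw [Int.odd_iff, Int.odd_iff, Int.ModEq]
  lia

theorem card_rotation_eq_one (s t : Finset (Fin 3)) (hst : #s = #t) (hs : #s = 1 ∨ #s = 2) :
    #{k | ∀ i, i ∈ s ↔ i + k ∈ t} = 1 := by
  revert s t
  decide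

theorem card_modEq_rotation_eq_one {n : ℕ} (hn : n % 4 = 1 ∨ n % 4 = 2) {u v : Fin 3 → ℤ}
    (hu : u ∈ integralSphere (Fin 3) n) (hv : v ∈ integralSphere (Fin 3) n) :
    #{k | ∀ i, u i ≡ v (i + k) [ZMOD 2]} = 1 := by
  have hu' := card_odd_of_mem_integralSphere hu
  have hv' := card_odd_of_mem_integralSphere hv
  simpa [modEq_two_iff_odd_iff_odd] using
    card_rotation_eq_one _ _ (hu'.trans hv'.symm) (hu' ▸ hn)

theorem card_primitivePairs_modEq_comp {ι : Type*} [Fintype ι] [DecidableEq ι] (σ : Equiv.Perm ι)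
    (n : ℕ) :
    #{w ∈ primitivePairs ι n | ∀ i, w.1 i ≡ w.2 (σ i) [ZMOD 2]} =
      #{w ∈ primitivePairs ι n | ∀ i, w.1 i ≡ w.2 i [ZMOD 2]} := by
  refine card_equiv ((Equiv.refl _).prodCongr (σ.symm.arrowCongr (Equiv.refl ℤ))) fun w => ?_
  have hgcd : pairGcd (w.1, w.2 ∘ σ) = pairGcd w := by
    refine Nat.dvd_left_iff_eq.mp fun k => ?_
    rw [dvd_pairGcd_iff, dvd_pairGcd_iff]
    exact and_congr_right' (σ.surjective.forall (p := fun j => (k : ℤ) ∣ w.2 j)).symm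
  have hdot : w.2 ∘ σ ⬝ᵥ w.2 ∘ σ = w.2 ⬝ᵥ w.2 := comp_equiv_dotProduct_comp_equiv _ _ σ
  have hw : ((Equiv.refl _).prodCongr (σ.symm.arrowCongr (Equiv.refl ℤ))) w = (w.1, w.2 ∘ σ) := rfl
  rw [hw, mem_filter, mem_filter, mem_primitivePairs, mem_primitivePairs, hgcd,
    mem_integralSphere (v := w.2 ∘ σ), mem_integralSphere (v := w.2), hdot]
  rfl

theorem three_mul_card_primitivePairs_modEq {n : ℕ} (hn : n % 4 = 1 ∨ n % 4 = 2) :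
    3 * #{w ∈ primitivePairs (Fin 3) n | ∀ i, w.1 i ≡ w.2 i [ZMOD 2]} =
      #(primitivePairs (Fin 3) n) := by
  calc 3 * #{w ∈ primitivePairs (Fin 3) n | ∀ i, w.1 i ≡ w.2 i [ZMOD 2]}
      = ∑ _k : Fin 3, #{w ∈ primitivePairs (Fin 3) n | ∀ i, w.1 i ≡ w.2 i [ZMOD 2]} := by
        rw [sum_const, card_univ, Fintype.card_fin, smul_eq_mul]
    _ = ∑ k : Fin 3, #{w ∈ primitivePairs (Fin 3) n | ∀ i, w.1 i ≡ w.2 (i + k) [ZMOD 2]} := by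
        refine sum_congr rfl fun k _ => ?_
        convert (card_primitivePairs_modEq_comp (Equiv.addRight k) n).symm
        rfl
    _ = ∑ w ∈ primitivePairs (Fin 3) n, #{k | ∀ i, w.1 i ≡ w.2 (i + k) [ZMOD 2]} := by
        simp only [card_filter]
        exact sum_comm
    _ = #(primitivePairs (Fin 3) n) := by
        rw [card_eq_sum_ones]
        refine sum_congr rfl fun w hw => ?_
        obtain ⟨⟨hu, hv⟩, -⟩ := mem_primitivePairs.mp hw
        exact card_modEq_rotation_eq_one hn hu hv

end Parity

section KleinQuadric

variable {ι : Type*}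

/-- The map `(u, v) ↦ (u + v, u - v)`. It turns the equation `u ⬝ᵥ v = 0` into the equality of two
norms. -/
def sumDiff (w : (ι → ℤ) × (ι → ℤ)) : (ι → ℤ) × (ι → ℤ) := (w.1 + w.2, w.1 - w.2)

theorem sumDiff_sumDiff (w : (ι → ℤ) × (ι → ℤ)) : sumDiff (sumDiff w) = (2 : ℤ) • w := by
  refine Prod.ext ?_ ?_ <;> simp only [sumDiff, Prod.smul_fst, Prod.smul_snd] <;> module

theorem sumDiff_injective : Function.Injective (sumDiff (ι := ι)) := by
  have hcomp : sumDiff ∘ sumDiff = fun w : (ι → ℤ) × (ι → ℤ) => (2 : ℤ) • w :=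
    funext sumDiff_sumDiff
  exact Function.Injective.of_comp (f := sumDiff) (hcomp ▸ smul_right_injective _ two_ne_zero)

theorem mem_range_sumDiff {w : (ι → ℤ) × (ι → ℤ)} :
    w ∈ Set.range sumDiff ↔ ∀ i, w.1 i ≡ w.2 i [ZMOD 2] := by
  constructor
  · rintro ⟨y, rfl⟩ i
    refine (Int.modEq_iff_dvd.mpr ⟨y.2 i, ?_⟩).symm
    simp only [sumDiff, Pi.add_apply, Pi.sub_apply]
    ring
  · intro h
    choose z hz using fun i => (h i).symm.dvd
    refine ⟨(w.2 + z, z), Prod.ext (funext fun i => ?_) (add_sub_cancel_right _ _)⟩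
    simp only [sumDiff, Pi.add_apply]
    linear_combination -hz i

variable [Fintype ι]

/-- The primitive pairs of orthogonal integral vectors with total squared norm `n`. For `ι = Fin 3`
these are the primitive integral points of the Klein quadric. -/
def kleinPairs (ι : Type*) [Fintype ι] (n : ℕ) : Set ((ι → ℤ) × (ι → ℤ)) :=
  {w | pairGcd w = 1 ∧ w.1 ⬝ᵥ w.2 = 0 ∧ w.1 ⬝ᵥ w.1 + w.2 ⬝ᵥ w.2 = n}

theorem two_dvd_pairGcd_sumDiff_iff {w : (ι → ℤ) × (ι → ℤ)} :
    2 ∣ pairGcd (sumDiff w) ↔ ∀ i, w.1 i ≡ w.2 i [ZMOD 2] := by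
  rw [dvd_pairGcd_iff, ← forall_and]
  refine forall_congr' fun i => ?_
  simp only [sumDiff, Pi.add_apply, Pi.sub_apply, Int.ModEq, Nat.cast_ofNat]
  omega

theorem pairGcd_dvd_pairGcd_sumDiff (w : (ι → ℤ) × (ι → ℤ)) : pairGcd w ∣ pairGcd (sumDiff w) := by
  obtain ⟨hu, hv⟩ := dvd_pairGcd_iff.mp (dvd_refl (pairGcd w))
  exact dvd_pairGcd_iff.mpr ⟨fun i => dvd_add (hu i) (hv i), fun i => dvd_sub (hu i) (hv i)⟩

theorem pairGcd_sumDiff_dvd (w : (ι → ℤ) × (ι → ℤ)) : pairGcd (sumDiff w) ∣ 2 * pairGcd w := by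
  have h := pairGcd_dvd_pairGcd_sumDiff (sumDiff w)
  rwa [sumDiff_sumDiff, ← Nat.cast_two, pairGcd_smul] at h

theorem pairGcd_sumDiff_eq_one_iff {w : (ι → ℤ) × (ι → ℤ)} :
    pairGcd (sumDiff w) = 1 ↔ pairGcd w = 1 ∧ ¬ ∀ i, w.1 i ≡ w.2 i [ZMOD 2] := by
  rw [← two_dvd_pairGcd_sumDiff_iff]
  constructor
  · intro h
    exact ⟨Nat.dvd_one.mp (h ▸ pairGcd_dvd_pairGcd_sumDiff w), h ▸ by decide⟩
  · rintro ⟨hw, hodd⟩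
    have hdvd := pairGcd_sumDiff_dvd w
    rw [hw, mul_one] at hdvd
    exact ((Nat.dvd_prime Nat.prime_two).mp hdvd).resolve_right fun h => hodd h.symm.dvd

variable [DecidableEq ι]

theorem sumDiff_mem_integralSphere_iff {n : ℕ} {w : (ι → ℤ) × (ι → ℤ)} :
    ((sumDiff w).1 ∈ integralSphere ι n ∧ (sumDiff w).2 ∈ integralSphere ι n) ↔
      w.1 ⬝ᵥ w.2 = 0 ∧ w.1 ⬝ᵥ w.1 + w.2 ⬝ᵥ w.2 = n := by
  simp only [mem_integralSphere, sumDiff, add_dotProduct, dotProduct_add, sub_dotProduct,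
    dotProduct_sub, dotProduct_comm w.2 w.1]
  constructor <;> rintro ⟨h, h'⟩ <;> constructor <;> linarith

theorem sumDiff_mem_primitivePairs_iff {n : ℕ} (hn : ¬ 4 ∣ n) {w : (ι → ℤ) × (ι → ℤ)} :
    sumDiff w ∈ primitivePairs ι n ↔ w ∈ kleinPairs ι n := by
  rw [mem_primitivePairs, kleinPairs, Set.mem_ofPred_eq, and_comm, ← sumDiff_mem_integralSphere_iff]
  refine and_congr_left fun hw => ?_
  rw [pairGcd_sumDiff_eq_one_iff, and_iff_left_iff_imp, ← two_dvd_pairGcd_sumDiff_iff]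
  intro _ h
  exact hn (sq_dvd_of_dvd_of_mem_integralSphere hw.1 (dvd_pairGcd_iff.mp h).1)

theorem sumDiff_mem_kleinPairs_iff {n : ℕ} {w : (ι → ℤ) × (ι → ℤ)} :
    sumDiff w ∈ kleinPairs ι (4 * n) ↔
      w ∈ primitivePairs ι n ∧ ¬ ∀ i, w.1 i ≡ w.2 i [ZMOD 2] := by
  have hfour : 4 * n = 2 ^ 2 * n := rfl
  rw [kleinPairs, Set.mem_ofPred_eq, ← sumDiff_mem_integralSphere_iff, sumDiff_sumDiff,
    pairGcd_sumDiff_eq_one_iff, hfour, ← Nat.cast_two, Prod.smul_fst, Prod.smul_snd,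
    smul_mem_integralSphere_iff two_ne_zero, smul_mem_integralSphere_iff two_ne_zero,
    mem_primitivePairs]
  tauto

theorem ncard_kleinPairs {n : ℕ} (hn : ¬ 4 ∣ n)
    [DecidablePred fun w : (ι → ℤ) × (ι → ℤ) => ∀ i, w.1 i ≡ w.2 i [ZMOD 2]] :
    (kleinPairs ι n).ncard = #{w ∈ primitivePairs ι n | ∀ i, w.1 i ≡ w.2 i [ZMOD 2]} := by
  have himage : sumDiff '' kleinPairs ι n =
      ({w ∈ primitivePairs ι n | ∀ i, w.1 i ≡ w.2 i [ZMOD 2]} : Finset _) := by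
    have hpre : kleinPairs ι n = sumDiff ⁻¹' primitivePairs ι n :=
      Set.ext fun w => (sumDiff_mem_primitivePairs_iff hn).symm
    rw [hpre, Set.image_preimage_eq_inter_range, coe_filter]
    exact Set.ext fun w => and_congr_right' mem_range_sumDiff
  rw [← Set.ncard_image_of_injective _ sumDiff_injective, himage, Set.ncard_coe_finset]

theorem kleinPairs_four_mul_subset_range_sumDiff (n : ℕ) :
    kleinPairs (Fin 3) (4 * n) ⊆ Set.range sumDiff := by
  rintro w ⟨-, hw⟩
  have hu := even_of_mem_integralSphere_four_mul (sumDiff_mem_integralSphere_iff.mpr hw).1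
  refine mem_range_sumDiff.mpr fun i => ?_
  have hi := (hu i).two_dvd
  simp only [sumDiff, Pi.add_apply] at hi
  rw [Int.ModEq]
  lia

theorem ncard_kleinPairs_four_mul (n : ℕ) :
    (kleinPairs (Fin 3) (4 * n)).ncard =
      #{w ∈ primitivePairs (Fin 3) n | ¬ ∀ i, w.1 i ≡ w.2 i [ZMOD 2]} := by
  have hpre : sumDiff ⁻¹' kleinPairs (Fin 3) (4 * n) =
      ({w ∈ primitivePairs (Fin 3) n | ¬ ∀ i, w.1 i ≡ w.2 i [ZMOD 2]} : Finset _) := by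
    ext w
    rw [Set.mem_preimage, sumDiff_mem_kleinPairs_iff, mem_coe, mem_filter]
  rw [← Set.image_preimage_eq_of_subset (kleinPairs_four_mul_subset_range_sumDiff n),
    Set.ncard_image_of_injective _ sumDiff_injective, hpre, Set.ncard_coe_finset]

end KleinQuadric

section PluckerCoordinates

/-- The coordinates `(a, b, c, d, e, f)` of a bivector, regrouped as the pair
`((a, b, c), (f, -e, d))`, which turns the Plücker relation `a f - b e + c d = 0` into
orthogonality. -/
def pluckerEquiv : (Fin 6 → ℤ) ≃ (Fin 3 → ℤ) × (Fin 3 → ℤ) where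
  toFun w := (![w 0, w 1, w 2], ![w 5, -w 4, w 3])
  invFun w := ![w.1 0, w.1 1, w.1 2, w.2 2, -w.2 1, w.2 0]
  left_inv w := by
    ext i
    fin_cases i <;> simp
  right_inv w := by
    ext i <;> fin_cases i <;> simp

theorem pairGcd_pluckerEquiv (w : Fin 6 → ℤ) : pairGcd (pluckerEquiv w) = (univ.gcd w).natAbs := by
  refine Nat.dvd_left_iff_eq.mp fun k => ?_
  rw [dvd_pairGcd_iff, ← Int.natCast_dvd, Finset.dvd_gcd_iff]
  simp only [pluckerEquiv, Equiv.coe_fn_mk, Fin.forall_fin_succ, Matrix.cons_val_zero,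
    Matrix.cons_val_succ, Matrix.cons_val_fin_one, dvd_neg, mem_univ, forall_const,
    Fin.succ_zero_eq_one, Fin.succ_one_eq_two, Fin.reduceSucc, IsEmpty.forall_iff, and_true]
  tauto

theorem pairGcd_pluckerEquiv_eq_one_iff (w : Fin 6 → ℤ) :
    pairGcd (pluckerEquiv w) = 1 ↔ univ.gcd w = 1 := by
  rw [pairGcd_pluckerEquiv, ← Int.isUnit_iff_natAbs_eq, ← normalize_eq_one, Finset.normalize_gcd]

theorem r24_eq_ncard_kleinPairs (n : ℕ) : r24 n = ((kleinPairs (Fin 3) n).ncard : ℚ) / 2 := by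
  have hmem (w : Fin 6 → ℤ) : (univ.gcd w = 1 ∧ w 0 * w 5 - w 1 * w 4 + w 2 * w 3 = 0 ∧
      w 0 ^ 2 + w 1 ^ 2 + w 2 ^ 2 + w 3 ^ 2 + w 4 ^ 2 + w 5 ^ 2 = (n : ℤ)) ↔
      pluckerEquiv w ∈ kleinPairs (Fin 3) n := by
    refine and_congr (pairGcd_pluckerEquiv_eq_one_iff w).symm (and_congr ?_ ?_) <;>
      simp only [pluckerEquiv, Equiv.coe_fn_mk, dotProduct, Fin.sum_univ_three, Matrix.cons_val] <;>
      constructor <;> intro h <;> linear_combination h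
  rw [r24, Nat.card_congr (pluckerEquiv.subtypeEquiv hmem)]
  rfl

theorem r3_eq_card_integralSphere (n : ℕ) : r3 n = #(integralSphere (Fin 3) n) := by
  refine Nat.subtype_card _ fun v => ?_
  rw [mem_integralSphere, dotProduct, Fin.sum_univ_three, sq, sq, sq]

theorem r24_eq_of_mod_four_eq_three {n : ℕ} (hn : n % 4 = 3) :
    r24 n = 1 / 2 * #(primitivePairs (Fin 3) n) := by
  have hall : ∀ w ∈ primitivePairs (Fin 3) n, ∀ i, w.1 i ≡ w.2 i [ZMOD 2] := by
    intro w hw i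
    obtain ⟨⟨hu, hv⟩, -⟩ := mem_primitivePairs.mp hw
    exact modEq_two_iff_odd_iff_odd.mpr
      (iff_of_true (odd_of_mem_integralSphere hn hu i) (odd_of_mem_integralSphere hn hv i))
  rw [r24_eq_ncard_kleinPairs, ncard_kleinPairs (by lia), filter_true_of_mem hall]
  ring

theorem r24_eq_of_mod_four_eq_one_or_two {n : ℕ} (hn : n % 4 = 1 ∨ n % 4 = 2) :
    r24 n = 1 / 6 * #(primitivePairs (Fin 3) n) := by
  rw [r24_eq_ncard_kleinPairs, ncard_kleinPairs (by lia), ← three_mul_card_primitivePairs_modEq hn]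
  push_cast
  ring

theorem r24_four_mul_eq_of_mod_four_eq_one_or_two {n : ℕ} (hn : n % 4 = 1 ∨ n % 4 = 2) :
    r24 (4 * n) = 1 / 3 * #(primitivePairs (Fin 3) n) := by
  have hsplit := card_filter_add_card_filter_not (s := primitivePairs (Fin 3) n)
    fun w => ∀ i, w.1 i ≡ w.2 i [ZMOD 2]
  have hthree := three_mul_card_primitivePairs_modEq hn
  have htwo : 3 * #{w ∈ primitivePairs (Fin 3) n | ¬ ∀ i, w.1 i ≡ w.2 i [ZMOD 2]} =
      2 * #(primitivePairs (Fin 3) n) := by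
    lia
  rw [r24_eq_ncard_kleinPairs, ncard_kleinPairs_four_mul]
  have hcast := congrArg (Nat.cast : ℕ → ℚ) htwo
  push_cast at hcast
  linarith

end PluckerCoordinates

/-- the explicit formula for `r₂₄(d)`, for
`d = d₀·4ᵉ·f²` with `d₀` squarefree, `f` odd, `e ∈ {0,1}` and
`d mod 16 ∉ {0,7,12,15}`. -/
theorem r24_formula (d d₀ f e : ℕ) (hd : 0 < d)
    (hD : ¬(d % 16 = 0 ∨ d % 16 = 7 ∨ d % 16 = 12 ∨ d % 16 = 15))
    (hfact : d = d₀ * 4 ^ e * f ^ 2) (hsq : Squarefree d₀) (hf : Odd f)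
    (he : e ≤ 1) :
    r24 d =
      (if d % 4 = 3 then (1 / 2 : ℚ) else if d % 4 = 0 then 1 / 3 else 1 / 6) *
        (r3 d₀ : ℚ) ^ 2 * (f : ℚ) ^ 2 *
        ∑ c ∈ f.divisors,
          ((2 ^ c.primeFactors.card : ℚ) / (c : ℚ)) *
            ∏ p ∈ f.primeFactors,
              (1 - (p : ℚ)⁻¹ * ((jacobiSym (-(d₀ : ℤ)) p : ℤ) : ℚ)) ^
                (if p ∣ f / c then 2 else 1) := by
  have hcount := card_primitivePairs_of_squarefree hsq hf
  rw [primitiveFactor_eq _ hf.pos.ne', ← r3_eq_card_integralSphere] at hcount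
  rw [mul_assoc, mul_assoc, ← hcount]
  have hfour : ¬ 4 ∣ f ^ 2 * d₀ :=
    not_sq_dvd_mul_sq_of_squarefree Nat.prime_two hsq hf.not_two_dvd_nat
  have hd' : d = 4 ^ e * (f ^ 2 * d₀) := by rw [hfact]; ring
  generalize f ^ 2 * d₀ = n at hd' hfour ⊢
  obtain rfl | rfl : e = 0 ∨ e = 1 := by lia
  · rw [pow_zero, one_mul] at hd'
    subst hd'
    split_ifs with h3 h0
    · exact r24_eq_of_mod_four_eq_three h3
    · exact absurd (Nat.dvd_of_mod_eq_zero h0) hfour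
    · exact r24_eq_of_mod_four_eq_one_or_two (by lia)
  · rw [pow_one] at hd'
    subst hd'
    rw [if_neg (by lia), if_pos (Nat.mul_mod_right 4 n)]
    exact r24_four_mul_eq_of_mod_four_eq_one_or_two (by lia)
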